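/- arXiv:2506.01903 — 6 statements merged into one kernel-verified Lean document; each statement's English description precedes it below -/
import Mathlib

section
/- If an (n,m,p)-quantum random access code exists with 1/2 ≤ p ≤ 1, then m ≥ (1 − H(2p(1−p)))·n − log₂(n+1), where H denotes binary entropy with base-2 logarithms. -/
open Matrix BigOperators ComplexOrder

/-- Binary entropy with base-2 logarithms; `Real.logb 2 0 = 0`, so `binEntropy2 0 = binEntropy2 1 = 0`. -/
noncomputable def binEntropy2 (q : ℝ) : ℝ :=
  -q * Real.logb 2 q - (1 - q) * Real.logb 2 (1 - q)

/-!
The pretty good measurement of an ensemble `ρ x` is a single measurement that answers every binary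
question about `x` with success probability at least `p ^ 2 + (1 - p) ^ 2 = 1 - 2p(1 - p)` whenever
some measurement tailored to that question succeeds with probability `p`; this is the
Cauchy–Schwarz inequality for a weighted Hilbert–Schmidt form. Measuring a random access code of
uniformly random words in this way therefore gives a channel `x ↦ y` with small error probability in
every bit. The error pattern `x ∆ y` is then distributed with entropy at most the sum of the
entropies of its bits, while each of its `2 ^ n` values has probability at most `2 ^ m / 2 ^ n`, as
an outcome `y` has probability at most `re (Q y).trace` in any state and these traces add up to the
dimension `2 ^ m`. Comparing the two bounds on the entropy yields `n - m ≤ n H(2p(1 - p))`.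
-/

open Finset Real
open scoped symmDiff

section Entropy

lemma binEntropy2_mul_log_two (q : ℝ) : binEntropy2 q * log 2 = binEntropy q := by
  have log_two_ne_zero : log 2 ≠ 0 := (log_pos one_lt_two).ne'
  rw [binEntropy2, binEntropy_eq_negMulLog_add_negMulLog_one_sub, negMulLog, negMulLog, logb, logb]
  field_simp
  ring

lemma binEntropy_le_binEntropy_of_one_sub_le {q r : ℝ} (hr : r ≤ 1 / 2) (hrq : 1 - r ≤ q)
    (hq : q ≤ 1) : binEntropy q ≤ binEntropy r := by
  have half_le : 2⁻¹ ≤ 1 - r := by linarith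
  rw [← binEntropy_one_sub r]
  exact binEntropy_strictAntiOn.antitoneOn ⟨half_le, hrq.trans hq⟩ ⟨half_le.trans hrq, hq⟩ hrq

variable {ι : Type*} {α : ι → Type*} [Fintype ι] [∀ i, Fintype (α i)]

lemma sum_negMulLog_le_neg_sum_mul_log {β : Type*} [Fintype β] {P Q : β → ℝ}
    (hP : ∀ b, 0 ≤ P b) (hQ : ∀ b, 0 ≤ Q b) (hPQ : ∀ b, Q b = 0 → P b = 0)
    (hsum : ∑ b, Q b ≤ ∑ b, P b) :
    ∑ b, negMulLog (P b) ≤ -∑ b, P b * log (Q b) := by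
  have pointwise (b : β) : negMulLog (P b) + P b * log (Q b) ≤ Q b - P b := by
    obtain hPb | hPb := (hP b).eq_or_lt
    · simpa [← hPb] using hQ b
    have hQb : 0 < Q b := (hQ b).lt_of_ne' fun h ↦ hPb.ne' (hPQ b h)
    calc negMulLog (P b) + P b * log (Q b) = P b * log (Q b / P b) := by
          rw [log_div hQb.ne' hPb.ne', negMulLog]; ring
      _ ≤ P b * (Q b / P b - 1) := by gcongr; exact log_le_sub_one_of_pos (by positivity)
      _ = Q b - P b := by field_simp
  have total := sum_le_sum fun b (_ : b ∈ univ) ↦ pointwise b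
  rw [sum_add_distrib, sum_sub_distrib] at total
  linarith

lemma neg_log_le_sum_negMulLog {β : Type*} [Fintype β] {P : β → ℝ} {C : ℝ}
    (hP : ∀ b, 0 ≤ P b) (hsum : ∑ b, P b = 1) (hC : ∀ b, P b ≤ C) :
    -log C ≤ ∑ b, negMulLog (P b) := by
  calc -log C = ∑ b, P b * -log C := by rw [← sum_mul, hsum, one_mul]
    _ ≤ ∑ b, negMulLog (P b) := sum_le_sum fun b _ ↦ ?_
  obtain hPb | hPb := (hP b).eq_or_lt
  · simp [← hPb]
  · rw [negMulLog, neg_mul_comm]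
    gcongr
    exact hC b

variable [DecidableEq ι] [∀ i, DecidableEq (α i)] {P : (∀ i, α i) → ℝ}

/-- The marginal on coordinate `i` of a weight function `P` on a finite product. -/
def marginal (P : (∀ i, α i) → ℝ) (i : ι) (a : α i) : ℝ := ∑ z with z i = a, P z

lemma marginal_nonneg (hP : ∀ z, 0 ≤ P z) (i : ι) (a : α i) : 0 ≤ marginal P i a :=
  sum_nonneg fun z _ ↦ hP z

lemma sum_marginal (P : (∀ i, α i) → ℝ) (i : ι) : ∑ a, marginal P i a = ∑ z, P z :=
  sum_fiberwise univ (fun z : ∀ i, α i ↦ z i) P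

lemma le_marginal (hP : ∀ z, 0 ≤ P z) (i : ι) (z : ∀ i, α i) : P z ≤ marginal P i (z i) :=
  single_le_sum (fun y _ ↦ hP y) (by simp)

lemma sum_mul_marginal (P : (∀ i, α i) → ℝ) (i : ι) (f : α i → ℝ) :
    ∑ z, P z * f (z i) = ∑ a, marginal P i a * f a := by
  rw [← sum_fiberwise univ fun z : ∀ i, α i ↦ z i]
  refine sum_congr rfl fun a _ ↦ ?_
  rw [marginal, sum_mul]
  exact sum_congr rfl fun z hz ↦ by rw [(mem_filter.1 hz).2]

theorem sum_negMulLog_le_sum_negMulLog_marginal (hP : ∀ z, 0 ≤ P z) (hsum : ∑ z, P z = 1) :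
    ∑ z, negMulLog (P z) ≤ ∑ i, ∑ a, negMulLog (marginal P i a) := by
  have eq_zero_of_marginal {z : ∀ i, α i} {i : ι} (h : marginal P i (z i) = 0) : P z = 0 :=
    le_antisymm ((le_marginal hP i z).trans_eq h) (hP z)
  have log_prod_marginal (z : ∀ i, α i) :
      P z * log (∏ i, marginal P i (z i)) = ∑ i, P z * log (marginal P i (z i)) := by
    by_cases hz : P z = 0
    · simp [hz]
    · rw [log_prod fun i _ h ↦ hz (eq_zero_of_marginal h), mul_sum]
  calc ∑ z, negMulLog (P z)
      ≤ -∑ z, P z * log (∏ i, marginal P i (z i)) := by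
        refine sum_negMulLog_le_neg_sum_mul_log hP
          (fun z ↦ prod_nonneg fun i _ ↦ marginal_nonneg hP i _) (fun z hz ↦ ?_) ?_
        · obtain ⟨i, -, hi⟩ := prod_eq_zero_iff.1 hz
          exact eq_zero_of_marginal hi
        · simp [← Fintype.prod_sum, sum_marginal, hsum]
    _ = -∑ i, ∑ z, P z * log (marginal P i (z i)) := by
        simp_rw [log_prod_marginal]; rw [sum_comm]
    _ = ∑ i, ∑ a, negMulLog (marginal P i a) := by
        simp_rw [fun i ↦ sum_mul_marginal P i fun a ↦ log (marginal P i a), negMulLog, neg_mul,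
          sum_neg_distrib]

theorem sum_negMulLog_le_sum_binEntropy {P : (ι → Bool) → ℝ} (hP : ∀ z, 0 ≤ P z)
    (hsum : ∑ z, P z = 1) :
    ∑ z, negMulLog (P z) ≤ ∑ i, binEntropy (marginal P i false) := by
  refine (sum_negMulLog_le_sum_negMulLog_marginal hP hsum).trans_eq (sum_congr rfl fun i _ ↦ ?_)
  have total : marginal P i true + marginal P i false = 1 :=
    (Fintype.sum_bool _).symm.trans ((sum_marginal P i).trans hsum)
  rw [Fintype.sum_bool, binEntropy_eq_negMulLog_add_negMulLog_one_sub, ← eq_sub_of_add_eq total,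
    add_comm]

end Entropy

section Decoding

variable {ι : Type*} [Fintype ι] [DecidableEq ι] {G : (ι → Bool) → (ι → Bool) → ℝ}

/-- The probability that coordinate `i` of a uniformly random word `x` is reproduced correctly when
`x` is sent through the channel that outputs `y` with probability `G x y`. -/
noncomputable def bitSuccess (G : (ι → Bool) → (ι → Bool) → ℝ) (i : ι) : ℝ :=
  𝔼 x, ∑ y with y i = x i, G x y

lemma bitSuccess_le_one (hG₀ : ∀ x y, 0 ≤ G x y) (hG₁ : ∀ x, ∑ y, G x y = 1) (i : ι) :
    bitSuccess G i ≤ 1 := by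
  refine expect_le univ_nonempty fun x _ ↦ ?_
  exact (sum_le_univ_sum_of_nonneg (hG₀ x)).trans_eq (hG₁ x)

/-- The distribution of the error pattern `x ∆ y` (bitwise xor) when a uniformly random word `x` is
sent through the channel `G`, with output `y`. -/
noncomputable def errorPattern (G : (ι → Bool) → (ι → Bool) → ℝ) (z : ι → Bool) : ℝ :=
  𝔼 x, G x (x ∆ z)

lemma errorPattern_nonneg (hG : ∀ x y, 0 ≤ G x y) (z : ι → Bool) : 0 ≤ errorPattern G z :=
  expect_nonneg fun x _ ↦ hG x _

lemma sum_errorPattern (hG : ∀ x, ∑ y, G x y = 1) : ∑ z, errorPattern G z = 1 := by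
  simp_rw [errorPattern, ← expect_sum_comm]
  have row (x : ι → Bool) : ∑ z, G x (x ∆ z) = 1 :=
    (Equiv.sum_comp (symmDiff_right_involutive x).toPerm (G x)).trans (hG x)
  simp [row]

lemma marginal_errorPattern_false (G : (ι → Bool) → (ι → Bool) → ℝ) (i : ι) :
    marginal (errorPattern G) i false = bitSuccess G i := by
  simp_rw [marginal, errorPattern, bitSuccess, ← expect_sum_comm]
  refine expect_congr rfl fun x _ ↦ ?_
  refine sum_equiv (symmDiff_right_involutive x).toPerm (fun z ↦ ?_) fun z _ ↦ rfl
  cases hx : x i <;> simp [Bool.symmDiff_eq_xor, hx]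

lemma errorPattern_le {t : (ι → Bool) → ℝ} (hG : ∀ x y, G x y ≤ t y) (z : ι → Bool) :
    errorPattern G z ≤ (∑ y, t y) / 2 ^ Fintype.card ι := by
  calc errorPattern G z ≤ 𝔼 x, t (x ∆ z) := expect_le_expect fun x _ ↦ hG x _
    _ = 𝔼 y, t y := Fintype.expect_equiv (symmDiff_left_involutive z).toPerm _ _ fun _ ↦ rfl
    _ = (∑ y, t y) / 2 ^ Fintype.card ι := by simp [Fintype.expect_eq_sum_div_card]

theorem card_mul_log_two_sub_log_le_sum_binEntropy {t : (ι → Bool) → ℝ}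
    (hG₀ : ∀ x y, 0 ≤ G x y) (hG₁ : ∀ x, ∑ y, G x y = 1) (hGt : ∀ x y, G x y ≤ t y) :
    Fintype.card ι * log 2 - log (∑ y, t y) ≤ ∑ i, binEntropy (bitSuccess G i) := by
  have t_pos : 0 < ∑ y, t y :=
    one_pos.trans_le ((hG₁ fun _ ↦ false).symm.trans_le (sum_le_sum fun y _ ↦ hGt _ y))
  calc Fintype.card ι * log 2 - log (∑ y, t y)
      = -log ((∑ y, t y) / 2 ^ Fintype.card ι) := by
        rw [log_div t_pos.ne' (by positivity), log_pow]; ring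
    _ ≤ ∑ z, negMulLog (errorPattern G z) :=
        neg_log_le_sum_negMulLog (errorPattern_nonneg hG₀) (sum_errorPattern hG₁)
          (errorPattern_le hGt)
    _ ≤ ∑ i, binEntropy (marginal (errorPattern G) i false) :=
        sum_negMulLog_le_sum_binEntropy (errorPattern_nonneg hG₀) (sum_errorPattern hG₁)
    _ = ∑ i, binEntropy (bitSuccess G i) := by simp_rw [marginal_errorPattern_false]

end Decoding

section PosSemidef

variable {𝕜 d : Type*} [RCLike 𝕜] [Fintype d] {A B S T X : Matrix d d 𝕜}

lemma exists_eq_conjTranspose_mul_self (hA : A.PosSemidef) : ∃ C : Matrix d d 𝕜, A = Cᴴ * C := by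
  classical
  open scoped MatrixOrder Matrix.Norms.L2Operator in
  exact CStarAlgebra.nonneg_iff_eq_star_mul_self.1 hA.nonneg

lemma exists_posSemidef_mul_self_eq (hS : S.PosSemidef) :
    ∃ T : Matrix d d 𝕜, T.PosSemidef ∧ T * T = S := by
  classical
  open scoped MatrixOrder Matrix.Norms.L2Operator in
  exact ⟨CFC.sqrt S, (CFC.sqrt_nonneg S).posSemidef, CFC.sqrt_mul_sqrt_self S hS.nonneg⟩

lemma trace_mul_nonneg_of_posSemidef (hA : A.PosSemidef) (hB : B.PosSemidef) :
    0 ≤ (A * B).trace := by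
  obtain ⟨C, rfl⟩ := exists_eq_conjTranspose_mul_self hA
  rw [Matrix.mul_assoc, trace_mul_comm]
  exact (hB.mul_mul_conjTranspose_same C).trace_nonneg

lemma re_trace_mul_nonneg (hA : A.PosSemidef) (hB : B.PosSemidef) :
    0 ≤ RCLike.re (A * B).trace :=
  (RCLike.nonneg_iff.1 (trace_mul_nonneg_of_posSemidef hA hB)).1

lemma mul_eq_zero_of_conjTranspose_mul_mul_eq_zero (hA : A.PosSemidef) (h : Xᴴ * A * X = 0) :
    A * X = 0 := by
  obtain ⟨C, rfl⟩ := exists_eq_conjTranspose_mul_self hA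
  have hCX : C * X = 0 := by
    rw [← conjTranspose_mul_self_eq_zero, conjTranspose_mul, ← h]
    simp only [Matrix.mul_assoc]
  rw [Matrix.mul_assoc, hCX, Matrix.mul_zero]

lemma mul_eq_zero_of_sum_mul_eq_zero {ι : Type*} [Fintype ι] {A : ι → Matrix d d 𝕜}
    (hA : ∀ i, (A i).PosSemidef) (h : (∑ i, A i) * X = 0) (i : ι) : A i * X = 0 := by
  have sum_eq_zero : ∑ i, Xᴴ * A i * X = 0 := by
    rw [← sum_mul, ← mul_sum, Matrix.mul_assoc, h, Matrix.mul_zero]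
  open scoped MatrixOrder in
  have eq_zero := (sum_eq_zero_iff_of_nonneg fun i _ ↦
    ((hA i).conjTranspose_mul_mul_same X).nonneg).1 sum_eq_zero
  exact mul_eq_zero_of_conjTranspose_mul_mul_eq_zero (hA i) (eq_zero i (mem_univ i))

lemma posSemidef_trace_smul_one_sub [DecidableEq d] (hA : A.PosSemidef) :
    (A.trace • (1 : Matrix d d 𝕜) - A).PosSemidef := by
  open scoped MatrixOrder Matrix.Norms.L2Operator in
  have hle : A ≤ algebraMap ℝ (Matrix d d 𝕜) (∑ i, hA.isHermitian.eigenvalues i) := by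
    refine le_algebraMap_of_spectrum_le ?_ hA.isHermitian.isSelfAdjoint
    rw [hA.isHermitian.spectrum_real_eq_range_eigenvalues]
    rintro _ ⟨i, rfl⟩
    exact single_le_sum (fun j _ ↦ hA.eigenvalues_nonneg j) (mem_univ i)
  rwa [hA.isHermitian.trace_eq_sum_eigenvalues, ← RCLike.ofReal_sum,
    ← RCLike.real_smul_eq_coe_smul, ← Algebra.algebraMap_eq_smul_one]

lemma trace_mul_le_trace_mul_trace (hA : A.PosSemidef) (hB : B.PosSemidef) :
    (A * B).trace ≤ A.trace * B.trace := by
  classical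
  have h := trace_mul_nonneg_of_posSemidef hA (posSemidef_trace_smul_one_sub hB)
  simpa [Matrix.mul_sub, mul_comm] using h

open scoped Matrix.Norms.L2Operator in
lemma exists_isHermitian_commuting_pseudoinverse (hT : T.IsHermitian) :
    ∃ W : Matrix d d 𝕜, W.IsHermitian ∧ T * W = W * T ∧ T * W * T = T := by
  classical
  have hcont (f : ℝ → ℝ) : ContinuousOn f (spectrum ℝ T) := T.finite_real_spectrum.continuousOn f
  have hTid : cfc (fun x : ℝ ↦ x) T = T := cfc_id' ℝ T hT.isSelfAdjoint
  have hTW : T * cfc (fun x : ℝ ↦ x⁻¹) T = cfc (fun x : ℝ ↦ x * x⁻¹) T := by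
    rw [cfc_mul _ _ T (hcont _) (hcont _), hTid]
  refine ⟨cfc (·⁻¹ : ℝ → ℝ) T, cfc_predicate _ T, ?_, ?_⟩
  · simpa only [hTid] using (cfc_commute_cfc (fun x : ℝ ↦ x) (·⁻¹) T).eq
  · have h := cfc_mul (fun x : ℝ ↦ x * x⁻¹) (fun x ↦ x) T (hcont _) (hcont _)
    simpa only [mul_inv_mul_cancel, hTid, ← hTW] using h.symm

lemma posSemidef_of_isHermitian_of_isIdempotentElem (hA : A.IsHermitian)
    (hAA : IsIdempotentElem A) : A.PosSemidef := by
  have h := posSemidef_conjTranspose_mul_self A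
  rwa [hA.eq, hAA.eq] at h

end PosSemidef

section Measurement

variable {𝕜 d X Y : Type*} [RCLike 𝕜]

/-- A density matrix: the state of a quantum system whose Hilbert space has basis `d`. -/
structure IsDensityMatrix [Fintype d] (ρ : Matrix d d 𝕜) : Prop where
  posSemidef : ρ.PosSemidef
  trace_eq_one : ρ.trace = 1

/-- The probability, by the Born rule, of the outcome with effect `A` on the state `ρ`. The trace is
real for positive semidefinite `A`; taking its real part only serves to land in `ℝ`. -/
noncomputable def bornProb [Fintype d] (A ρ : Matrix d d 𝕜) : ℝ := RCLike.re (A * ρ).trace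

lemma bornProb_le [Fintype d] {A ρ : Matrix d d 𝕜} (hA : A.PosSemidef) (hρ : IsDensityMatrix ρ) :
    bornProb A ρ ≤ RCLike.re A.trace := by
  have h := trace_mul_le_trace_mul_trace hA hρ.posSemidef
  rw [hρ.trace_eq_one, mul_one] at h
  exact (RCLike.le_iff_re_im.1 h).1

/-- A positive operator-valued measure (POVM) with outcomes in `X`: a quantum measurement that
yields the outcome `x` on the state `ρ` with probability `bornProb (Q x) ρ`. -/
structure IsPOVM [DecidableEq d] [Fintype X] (Q : X → Matrix d d 𝕜) : Prop where
  posSemidef (x : X) : (Q x).PosSemidef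
  sum_eq_one : ∑ x, Q x = 1

variable [DecidableEq d] [Fintype X]

lemma IsPOVM.sum_fiber [Fintype Y] [DecidableEq Y] {Q : X → Matrix d d 𝕜} (hQ : IsPOVM Q)
    (f : X → Y) : IsPOVM fun y ↦ ∑ x with f x = y, Q x where
  posSemidef _ := posSemidef_sum _ fun x _ ↦ hQ.posSemidef x
  sum_eq_one := (sum_fiberwise univ f Q).trans hQ.sum_eq_one

variable [Fintype d]

lemma IsPOVM.sum_bornProb {Q : X → Matrix d d 𝕜} (hQ : IsPOVM Q) (ρ : Matrix d d 𝕜) :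
    ∑ x, bornProb (Q x) ρ = RCLike.re ρ.trace := by
  simp_rw [bornProb]
  rw [← map_sum, ← trace_sum, ← sum_mul, hQ.sum_eq_one, Matrix.one_mul]

/- `T⁻¹ * ρ x * T⁻¹` is the pretty good measurement. For singular `T`, a pseudoinverse `W` replaces
`T⁻¹` and the projection `K` onto the kernel of `T` is shared equally among the outcomes. -/
theorem exists_isPOVM_mul_mul_eq [Nonempty X] {ρ : X → Matrix d d 𝕜} {T : Matrix d d 𝕜}
    (hT : T.IsHermitian) (hρ : ∀ x, (ρ x).PosSemidef) (hsum : ∑ x, ρ x = T * T) :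
    ∃ Q : X → Matrix d d 𝕜, IsPOVM Q ∧ ∀ x, T * Q x * T = ρ x := by
  obtain ⟨W, hW, hTW, hTWT⟩ := exists_isHermitian_commuting_pseudoinverse hT
  set K := 1 - T * W with hKdef
  have T_mul_K : T * K = 0 := by
    rw [hKdef, Matrix.mul_sub, hTW, ← Matrix.mul_assoc, hTWT, Matrix.mul_one, sub_self]
  have K_mul_T : K * T = 0 := by rw [hKdef, Matrix.sub_mul, hTWT, Matrix.one_mul, sub_self]
  have hK : K.IsHermitian := by
    rw [IsHermitian, conjTranspose_sub, conjTranspose_one, conjTranspose_mul, hT.eq, hW.eq, ← hTW]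
  have hKK : IsIdempotentElem K := by
    calc K * K = K * 1 - K * T * W := by rw [Matrix.mul_assoc, ← Matrix.mul_sub]
      _ = K := by rw [K_mul_T, Matrix.zero_mul, Matrix.mul_one, sub_zero]
  have rho_mul_K (x : X) : ρ x * K = 0 :=
    mul_eq_zero_of_sum_mul_eq_zero hρ (by rw [hsum, Matrix.mul_assoc, T_mul_K, Matrix.mul_zero]) x
  have rho_mul_WT (x : X) : ρ x * (W * T) = ρ x := by
    simpa [hKdef, Matrix.mul_sub, sub_eq_zero, ← hTW, eq_comm] using rho_mul_K x
  have TW_mul_rho (x : X) : T * W * ρ x = ρ x := by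
    simpa [(hρ x).isHermitian.eq, hT.eq, hW.eq] using congr_arg conjTranspose (rho_mul_WT x)
  refine ⟨fun x ↦ W * ρ x * W + (Fintype.card X : ℝ)⁻¹ • K, ⟨fun x ↦ ?_, ?_⟩, fun x ↦ ?_⟩
  · have h := (hρ x).mul_mul_conjTranspose_same W
    rw [hW.eq] at h
    exact h.add ((posSemidef_of_isHermitian_of_isIdempotentElem hK hKK).smul (by positivity))
  · calc ∑ x, (W * ρ x * W + (Fintype.card X : ℝ)⁻¹ • K) = W * (T * T) * W + K := by
          rw [sum_add_distrib, ← sum_mul, ← mul_sum, hsum, ← smul_sum]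
          simp [← Nat.cast_smul_eq_nsmul ℝ]
      _ = T * W + K := by rw [← Matrix.mul_assoc, ← hTW, hTWT]
      _ = 1 := add_sub_cancel _ _
  · calc T * (W * ρ x * W + (Fintype.card X : ℝ)⁻¹ • K) * T = T * W * ρ x * (W * T) := by
          simp only [Matrix.mul_add, Matrix.mul_smul, T_mul_K, smul_zero, add_zero,
            Matrix.mul_assoc]
      _ = ρ x := by rw [TW_mul_rho, rho_mul_WT]

end Measurement

section BilinForm

variable {V : Type*} [AddCommGroup V] [Module ℝ V] {B : LinearMap.BilinForm ℝ V}

lemma le_sum_apply_self_of_le_sum_apply (hB : B.IsPosSemidef) {m k : Bool → V} {u : V}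
    (hm : ∑ b, m b = u) (hk : ∑ b, k b = u) (hm₀ : 0 ≤ B (m true) (m false))
    {p : ℝ} (hp : 1 / 2 ≤ p) (hmk : p * B u u ≤ ∑ b, B (m b) (k b)) :
    (1 - 2 * p * (1 - p)) * B u u ≤ ∑ b, B (k b) (k b) := by
  have symm (v w : V) : B v w = B w v := hB.eq v w
  rw [Fintype.sum_bool] at hm hk hmk ⊢
  -- Cauchy–Schwarz for `e` and `f`; the constant comes from `1 - 2p(1 - p) = (1 + (2p - 1)²) / 2`.
  set e := m true - m false
  set f := k true - k false
  have ee_le : B e e ≤ B u u := by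
    have uu_sub_ee : B u u - B e e = 4 * B (m true) (m false) := by
      simp only [← hm, e, map_add, map_sub, LinearMap.add_apply, LinearMap.sub_apply,
        symm (m false)]
      ring
    linarith
  have sum_mk : B (m true) (k true) + B (m false) (k false) = (B u u + B e f) / 2 := by
    nth_rw 2 [← hk]
    simp only [← hm, e, f, map_add, map_sub, LinearMap.add_apply, LinearMap.sub_apply]
    ring
  have sum_kk : B (k true) (k true) + B (k false) (k false) = (B u u + B f f) / 2 := by
    simp only [← hk, f, map_add, map_sub, LinearMap.add_apply, LinearMap.sub_apply,
      symm (k false)]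
    ring
  have ef_ge : (2 * p - 1) * B u u ≤ B e f := by linarith
  have cauchy_schwarz : ((2 * p - 1) * B u u) ^ 2 ≤ B u u * B f f := by
    have uu_nonneg : 0 ≤ B u u := hB.nonneg u
    have slope_nonneg : 0 ≤ 2 * p - 1 := by linarith
    calc ((2 * p - 1) * B u u) ^ 2 ≤ B e f ^ 2 := by gcongr
      _ ≤ B e e * B f f :=
        B.apply_sq_le_of_symm hB.nonneg (LinearMap.BilinForm.isSymm_iff.1 hB.isSymm) e f
      _ ≤ B u u * B f f := by gcongr; exact hB.nonneg f
  have ff_ge : (2 * p - 1) ^ 2 * B u u ≤ B f f := by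
    obtain hu | hu := (hB.nonneg u).eq_or_lt
    · simpa [← hu] using hB.nonneg f
    · refine le_of_mul_le_mul_left ?_ hu
      linarith
  linarith

end BilinForm

section WeightedForm

variable {𝕜 d : Type*} [RCLike 𝕜] [Fintype d] {A B T : Matrix d d 𝕜}

/-- The real Hilbert–Schmidt form weighted by `T` on both sides. If `Q` is a measurement with
`T * Q x * T = ρ x`, then pairing a Hermitian `A` with `Q x` gives `bornProb A (ρ x)`. -/
noncomputable def weightedForm (T : Matrix d d 𝕜) : LinearMap.BilinForm ℝ (Matrix d d 𝕜) :=
  LinearMap.mk₂ ℝ (fun A B ↦ RCLike.re (Aᴴ * T * B * T).trace)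
    (fun _ _ _ ↦ by simp [Matrix.add_mul]) (fun _ _ _ ↦ by simp [RCLike.smul_re])
    (fun _ _ _ ↦ by simp [Matrix.mul_add, Matrix.add_mul]) (fun _ _ _ ↦ by simp [RCLike.smul_re])

lemma weightedForm_apply (T A B : Matrix d d 𝕜) :
    weightedForm T A B = RCLike.re (Aᴴ * T * B * T).trace := rfl

lemma weightedForm_isPosSemidef (hT : T.PosSemidef) : (weightedForm T).IsPosSemidef where
  eq A B := by
    have h : (Aᴴ * T * B * T)ᴴ = T * (Bᴴ * T * A) := by
      simp only [conjTranspose_mul, conjTranspose_conjTranspose, hT.isHermitian.eq,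
        Matrix.mul_assoc]
    rw [weightedForm_apply, ← RCLike.conj_re, starRingEnd_apply, ← trace_conjTranspose, h,
      trace_mul_comm, weightedForm_apply]
  nonneg A := re_trace_mul_nonneg (hT.conjTranspose_mul_mul_same A) hT

lemma weightedForm_nonneg (hT : T.IsHermitian) (hA : A.PosSemidef) (hB : B.PosSemidef) :
    0 ≤ weightedForm T A B := by
  rw [weightedForm_apply, hA.isHermitian.eq]
  have h := re_trace_mul_nonneg hA (hB.conjTranspose_mul_mul_same T)
  rwa [hT.eq, ← Matrix.mul_assoc, ← Matrix.mul_assoc] at h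

end WeightedForm

section MainBound

variable {𝕜 d X : Type*} [RCLike 𝕜] [Fintype d] [DecidableEq d] [Fintype X]

theorem exists_isPOVM_forall_le_expect_sum_fiber [Nonempty X] {ρ : X → Matrix d d 𝕜}
    (hρ : ∀ x, IsDensityMatrix (ρ x)) :
    ∃ Q : X → Matrix d d 𝕜, IsPOVM Q ∧ ∀ (f : X → Bool) (M : Bool → Matrix d d 𝕜) (p : ℝ),
      IsPOVM M → 1 / 2 ≤ p → p ≤ 𝔼 x, bornProb (M (f x)) (ρ x) →
        1 - 2 * p * (1 - p) ≤ 𝔼 x, ∑ y with f y = f x, bornProb (Q y) (ρ x) := by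
  obtain ⟨T, hT, hTT⟩ :=
    exists_posSemidef_mul_self_eq (posSemidef_sum univ fun x _ ↦ (hρ x).posSemidef)
  obtain ⟨Q, hQ, hQρ⟩ :=
    exists_isPOVM_mul_mul_eq hT.isHermitian (fun x ↦ (hρ x).posSemidef) hTT.symm
  refine ⟨Q, hQ, fun f M p hM hp hMp ↦ ?_⟩
  let K b := ∑ x with f x = b, Q x
  have hK : IsPOVM K := hQ.sum_fiber f
  have apply_Q {A : Matrix d d 𝕜} (hA : A.PosSemidef) (x : X) :
      weightedForm T A (Q x) = bornProb A (ρ x) := by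
    rw [weightedForm_apply, bornProb, ← hQρ, hA.isHermitian.eq, Matrix.mul_assoc, Matrix.mul_assoc,
      Matrix.mul_assoc]
  have sum_apply_K {A : Bool → Matrix d d 𝕜} (hA : IsPOVM A) :
      ∑ b, weightedForm T (A b) (K b) = ∑ x, bornProb (A (f x)) (ρ x) := by
    rw [← sum_fiberwise univ f]
    refine sum_congr rfl fun b _ ↦ ?_
    rw [map_sum]
    refine sum_congr rfl fun x hx ↦ ?_
    rw [apply_Q (hA.posSemidef b), (mem_filter.1 hx).2]
  have bornProb_K (x : X) :
      bornProb (K (f x)) (ρ x) = ∑ y with f y = f x, bornProb (Q y) (ρ x) := by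
    simp [K, bornProb, sum_mul]
  have apply_one_one : weightedForm T 1 1 = Fintype.card X := by
    nth_rw 2 [← hQ.sum_eq_one]
    simp [map_sum, apply_Q PosSemidef.one, bornProb, (hρ _).trace_eq_one]
  have card_pos : (0 : ℝ) < Fintype.card X := by positivity
  simp_rw [← bornProb_K]
  rw [Fintype.expect_eq_sum_div_card, le_div_iff₀ card_pos, ← apply_one_one] at hMp ⊢
  rw [← sum_apply_K hM] at hMp
  rw [← sum_apply_K hK]
  exact le_sum_apply_self_of_le_sum_apply (weightedForm_isPosSemidef hT) hM.sum_eq_one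
    hK.sum_eq_one (weightedForm_nonneg hT.isHermitian (hM.posSemidef _) (hM.posSemidef _)) hp hMp

variable {ι : Type*} [Fintype ι] [DecidableEq ι]

theorem qrac_qubit_lower_bound_general {ρ : (ι → Bool) → Matrix d d 𝕜} {p : ι → ℝ}
    (hp : ∀ i, 1 / 2 ≤ p i) (hρ : ∀ x, IsDensityMatrix (ρ x))
    (hQRAC : ∀ i, ∃ M : Bool → Matrix d d 𝕜, IsPOVM M ∧ p i ≤ 𝔼 x, bornProb (M (x i)) (ρ x)) :
    ∑ i, (1 - binEntropy2 (2 * p i * (1 - p i))) ≤ logb 2 (Fintype.card d) := by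
  obtain ⟨Q, hQ, hQM⟩ := exists_isPOVM_forall_le_expect_sum_fiber hρ
  let G x y := bornProb (Q y) (ρ x)
  have hG₀ x y : 0 ≤ G x y := re_trace_mul_nonneg (hQ.posSemidef y) (hρ x).posSemidef
  have hG₁ x : ∑ y, G x y = 1 := by
    rw [hQ.sum_bornProb, (hρ x).trace_eq_one, RCLike.one_re]
  have hGt x y : G x y ≤ RCLike.re (Q y).trace := bornProb_le (hQ.posSemidef y) (hρ x)
  have binEntropy_le (i : ι) : binEntropy (bitSuccess G i) ≤ binEntropy (2 * p i * (1 - p i)) := by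
    obtain ⟨M, hM, hMp⟩ := hQRAC i
    refine binEntropy_le_binEntropy_of_one_sub_le ?_ (hQM (· i) M _ hM (hp i) hMp)
      (bitSuccess_le_one hG₀ hG₁ i)
    linarith [sq_nonneg (2 * p i - 1)]
  have sum_trace : ∑ y, RCLike.re (Q y).trace = Fintype.card d := by
    rw [← map_sum, ← trace_sum, hQ.sum_eq_one]; simp
  have key := (card_mul_log_two_sub_log_le_sum_binEntropy hG₀ hG₁ hGt).trans
    (sum_le_sum fun i _ ↦ binEntropy_le i)
  rw [sum_trace] at key
  rw [logb, le_div_iff₀ (log_pos one_lt_two)]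
  calc (∑ i, (1 - binEntropy2 (2 * p i * (1 - p i)))) * log 2
      = Fintype.card ι * log 2 - ∑ i, binEntropy (2 * p i * (1 - p i)) := by
        simp [sum_mul, sub_mul, binEntropy2_mul_log_two]
    _ ≤ log (Fintype.card d) := by linarith

end MainBound

/-- If an (n,m,p)-QRAC exists with 1/2 ≤ p ≤ 1, then
`m ≥ (1 − H(2p(1−p)))·n − log₂(n+1)` where `H` is binary entropy (base 2). -/
theorem qrac_qubit_lower_bound (n m : ℕ) (p : ℝ) (hp : 1 / 2 ≤ p) (hp1 : p ≤ 1)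
    (ρ : (Fin n → Bool) → Matrix (Fin (2 ^ m)) (Fin (2 ^ m)) ℂ)
    (hρ : ∀ x, (ρ x).PosSemidef ∧ (ρ x).trace = 1)
    (hQRAC : ∀ i : Fin n, ∃ M : Bool → Matrix (Fin (2 ^ m)) (Fin (2 ^ m)) ℂ,
      (∀ b, (M b).PosSemidef) ∧ M false + M true = 1 ∧
      ∀ (x : Fin n → Bool) (b : Bool), x i = b → p ≤ ((M b * ρ x).trace).re) :
    (1 - binEntropy2 (2 * p * (1 - p))) * n - Real.logb 2 (n + 1) ≤ (m : ℝ) := by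
  have lossless := qrac_qubit_lower_bound_general (fun _ ↦ hp) (fun x ↦ ⟨(hρ x).1, (hρ x).2⟩)
    fun i ↦ by
      obtain ⟨M, hM, hM₁, hMp⟩ := hQRAC i
      exact ⟨M, ⟨hM, by rw [Fintype.sum_bool, add_comm, hM₁]⟩,
        le_expect univ_nonempty fun x _ ↦ hMp x _ rfl⟩
  have logb_nonneg : 0 ≤ logb 2 (n + 1) := logb_nonneg one_lt_two (by simp)
  calc (1 - binEntropy2 (2 * p * (1 - p))) * n - logb 2 (n + 1)
      ≤ (1 - binEntropy2 (2 * p * (1 - p))) * n := sub_le_self _ logb_nonneg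
    _ = ∑ _ : Fin n, (1 - binEntropy2 (2 * p * (1 - p))) := by
        rw [Fin.sum_const, nsmul_eq_mul, mul_comm]
    _ ≤ logb 2 (Fintype.card (Fin (2 ^ m))) := lossless
    _ = m := by simp [logb_pow]
end

section
/- There exists a universal constant C > 0 such that for all integers n ≥ 2, m ≥ 1, all p ∈ [1/2, 1], and all η ∈ (0,1): if an (n,m,p)-quantum random access code exists, then an (n, m', 1 − 2p(1−p) − η)-classical random access code exists for some m' ≤ m + C·(log₂ n + log₂(1/η)). -/
open Matrix BigOperators ComplexOrder

/-!
Let `d` be the dimension of the quantum code, `σ` the `±1` encoding of bits, and `A i` the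
contraction `M i true - M i false`, so that `σ (x i) tr (A i ρ x) ≥ 2 p - 1` for all `x` and `i`.
With `H x = θ ∑ i, σ (x i) A i`, the sum `∑ x, tr (exp (H x))` is at most `d (2 cosh θ) ^ n`: the
mixed moments of independent uniform signs are nonnegative, so in the expansion of `exp` each `A i`
may be replaced by the bound `1` on its norm. As `tr (exp (H x)) ≥ exp (tr (H x ρ x))`, setting
`r = exp (2 θ)` gives `2 ^ n r ^ (n p) ≤ d (1 + r) ^ n`. Choosing `r` so that `k = ⌈n p⌉` is the
mode of the weights `C(n, j) r ^ j` turns this into `2 ^ n ≤ d (n + 1) ^ 2 C(n, k)`.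

Hence the strings agreeing with `x` in exactly `k` places have density at least
`1 / (d (n + 1) ^ 2)`, and by a Chernoff and union bound some codebook of size polynomial in
`n` and `1 / η` times `d` is good for all `x`: sending a uniformly random codeword that agrees with
`x` in exactly `k` places recovers each bit with probability at least `k / n - η`. Finally,
`k / n ≥ p ≥ 1 - 2 p (1 - p)`.
-/

namespace RandomAccessCode

open Finset

/-- The `±1` encoding of a bit, with `true` sent to `1`. -/
def sign (b : Bool) : ℝ := if b then 1 else -1

section SignedSums

variable {ι 𝔸 : Type*} [Fintype ι] [DecidableEq ι] [NormedRing 𝔸] [NormedAlgebra ℝ 𝔸]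

theorem sum_prod_sign_pow_nonneg (e : ι → ℕ) :
    0 ≤ ∑ x : ι → Bool, ∏ i, sign (x i) ^ e i := by
  rw [← Fintype.prod_sum fun i b ↦ sign b ^ e i]
  refine prod_nonneg fun i _ ↦ ?_
  rcases Nat.even_or_odd (e i) with he | he <;> simp [sign, he.neg_one_pow]

theorem prod_sign_pow_mul_sign (e : ι → ℕ) (x : ι → Bool) (i : ι) :
    (∏ j, sign (x j) ^ e j) * sign (x i) = ∏ j, sign (x j) ^ (e + Pi.single i 1 : ι → ℕ) j := by
  simp only [Pi.add_apply, pow_add, prod_mul_distrib]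
  simp [Pi.single_apply, pow_ite]

theorem norm_sum_sign_smul_pow_le [NormOneClass 𝔸] (a : ι → 𝔸) (k : ℕ) (e : ι → ℕ) :
    ‖∑ x : ι → Bool, (∏ i, sign (x i) ^ e i) • (∑ i, sign (x i) • a i) ^ k‖ ≤
      ∑ x : ι → Bool, (∏ i, sign (x i) ^ e i) * (∑ i, sign (x i) * ‖a i‖) ^ k := by
  induction k generalizing e with
  | zero =>
    simp [← sum_smul, norm_smul, abs_of_nonneg (sum_prod_sign_pow_nonneg e)]
  | succ k ih =>
    calc ‖∑ x : ι → Bool, (∏ i, sign (x i) ^ e i) • (∑ i, sign (x i) • a i) ^ (k + 1)‖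
        = ‖∑ i, (∑ x : ι → Bool, (∏ j, sign (x j) ^ (e + Pi.single i 1 : ι → ℕ) j) •
            (∑ j, sign (x j) • a j) ^ k) * a i‖ := by
          simp only [← prod_sign_pow_mul_sign, sum_mul]
          rw [sum_comm]
          simp only [pow_succ, mul_sum, smul_sum, mul_smul_comm, smul_mul_assoc,
            smul_smul]
      _ ≤ ∑ i, ‖∑ x : ι → Bool, (∏ j, sign (x j) ^ (e + Pi.single i 1 : ι → ℕ) j) •
            (∑ j, sign (x j) • a j) ^ k‖ * ‖a i‖ :=
          (norm_sum_le _ _).trans (sum_le_sum fun i _ ↦ norm_mul_le _ _)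
      _ ≤ ∑ i, (∑ x : ι → Bool, (∏ j, sign (x j) ^ (e + Pi.single i 1 : ι → ℕ) j) *
            (∑ j, sign (x j) * ‖a j‖) ^ k) * ‖a i‖ := by
          gcongr with i
          exact ih _
      _ = ∑ x : ι → Bool, (∏ i, sign (x i) ^ e i) * (∑ i, sign (x i) * ‖a i‖) ^ (k + 1) := by
          simp only [← prod_sign_pow_mul_sign, sum_mul]
          rw [sum_comm]
          simp only [pow_succ, mul_sum, mul_assoc, mul_left_comm]

theorem sum_exp_sum_sign_mul (t : ι → ℝ) :
    ∑ x : ι → Bool, Real.exp (∑ i, sign (x i) * t i) = ∏ i, 2 * Real.cosh (t i) := by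
  simp only [Real.exp_sum]
  rw [← Fintype.prod_sum fun i b ↦ Real.exp (sign b * t i)]
  simp [sign, Real.cosh_eq, mul_div_cancel₀]

theorem norm_sum_exp_sum_sign_smul_le [NormOneClass 𝔸] [CompleteSpace 𝔸] (a : ι → 𝔸) :
    ‖∑ x : ι → Bool, NormedSpace.exp (∑ i, sign (x i) • a i)‖ ≤ ∏ i, 2 * Real.cosh ‖a i‖ := by
  rw [← sum_exp_sum_sign_mul]
  simp only [Real.exp_eq_exp_ℝ]
  refine (hasSum_sum fun x _ ↦ NormedSpace.exp_series_hasSum_exp' (𝕂 := ℝ)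
    (∑ i, sign (x i) • a i)).norm_le_of_bounded (hasSum_sum fun x _ ↦
      NormedSpace.exp_series_hasSum_exp' (𝕂 := ℝ) (∑ i, sign (x i) * ‖a i‖)) fun k ↦ ?_
  simp only [← smul_sum, norm_smul, smul_eq_mul, ← mul_sum]
  rw [Real.norm_of_nonneg (by positivity)]
  gcongr
  simpa using norm_sum_sign_smul_pow_le a k 0

end SignedSums

section CStarAlgebra

variable {A : Type*} [CStarAlgebra A] [PartialOrder A] [StarOrderedRing A]

theorem norm_sub_le_one_of_add_eq_one {a b : A} (ha : 0 ≤ a) (hb : 0 ≤ b) (hab : a + b = 1) :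
    ‖b - a‖ ≤ 1 := by
  have hsa : IsSelfAdjoint (b - a) := (IsSelfAdjoint.of_nonneg hb).sub (.of_nonneg ha)
  have hupper : b - a ≤ algebraMap ℝ A 1 := by
    rw [map_one, ← hab, add_comm]
    exact (sub_le_self b ha).trans (le_add_of_nonneg_right ha)
  have hlower : algebraMap ℝ A (-1) ≤ b - a := by
    rw [map_neg, map_one, ← hab, neg_le_iff_add_nonneg]
    convert add_nonneg hb hb using 1; abel
  rw [← cfc_id' ℝ (b - a)]
  refine norm_cfc_le zero_le_one fun x hx ↦ abs_le.mpr ⟨?_, ?_⟩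
  · exact (algebraMap_le_iff_le_spectrum hsa).mp hlower x hx
  · exact (le_algebraMap_iff_spectrum_le hsa).mp hupper x hx

theorem exp_smul_add_le_exp {a : A} (ha : IsSelfAdjoint a) (c : ℝ) :
    Real.exp c • (a + algebraMap ℝ A (1 - c)) ≤ NormedSpace.exp a := by
  rw [← CFC.real_exp_eq_normedSpace_exp ha]
  -- The left side is the tangent line of `exp` at `c`.
  calc Real.exp c • (a + algebraMap ℝ A (1 - c))
      = cfc (fun x ↦ Real.exp c * (x + (1 - c))) a := by
        rw [cfc_const_mul _ _ a, cfc_add_const _ _ a, cfc_id' ℝ a]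
    _ ≤ cfc Real.exp a := cfc_mono fun x _ ↦ by
        have := Real.add_one_le_exp (x - c)
        calc Real.exp c * (x + (1 - c)) ≤ Real.exp c * Real.exp (x - c) := by gcongr; linarith
          _ = Real.exp x := by rw [← Real.exp_add]; ring_nf

end CStarAlgebra

section Matrices

variable {κ 𝕜 : Type*} [Fintype κ] [RCLike 𝕜]

theorem trace_mul_nonneg {A B : Matrix κ κ 𝕜} (hA : A.PosSemidef) (hB : B.PosSemidef) :
    0 ≤ (A * B).trace := by
  rw [← B.transpose_transpose, ← sum_hadamard_eq]
  simpa [dotProduct, mulVec] using (hA.hadamard hB.transpose).dotProduct_mulVec_nonneg 1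

variable [DecidableEq κ]

open scoped MatrixOrder in
theorem le_one_of_trace_eq_one {ρ : Matrix κ κ 𝕜} (hρ : ρ.PosSemidef) (htr : ρ.trace = 1) :
    ρ ≤ 1 := by
  have hsum : ∑ i, hρ.1.eigenvalues i = 1 := by
    have := hρ.1.trace_eq_sum_eigenvalues
    rw [htr] at this
    exact_mod_cast this.symm
  rw [← map_one (algebraMap ℝ (Matrix κ κ 𝕜))]
  refine le_algebraMap_of_spectrum_le (fun r hr ↦ ?_) hρ.1
  obtain ⟨i, rfl⟩ := hρ.1.spectrum_real_eq_range_eigenvalues ▸ hr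
  exact hsum ▸ single_le_sum (fun j _ ↦ hρ.eigenvalues_nonneg j) (mem_univ i)

open scoped Matrix.Norms.L2Operator

theorem norm_trace_le (X : Matrix κ κ 𝕜) : ‖X.trace‖ ≤ Fintype.card κ * ‖X‖ := by
  have hdiag (i : κ) : ‖X i i‖ ≤ ‖X‖ := by
    have h := (PiLp.norm_apply_le _ i).trans (l2_opNorm_mulVec X (EuclideanSpace.single i 1))
    simpa using h
  simpa [Matrix.trace] using norm_sum_le_of_le univ fun i _ ↦ hdiag i

open scoped MatrixOrder in
theorem exp_trace_mul_le_trace_exp {H ρ : Matrix κ κ ℂ} (hH : H.IsHermitian)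
    (hρ : ρ.PosSemidef) (htr : ρ.trace = 1) :
    Real.exp (H * ρ).trace.re ≤ (NormedSpace.exp H).trace.re := by
  set c := (H * ρ).trace.re with hc
  have htangent := trace_mul_nonneg (Matrix.le_iff.mp (exp_smul_add_le_exp hH c)) hρ
  have hstate := trace_mul_nonneg (Matrix.nonneg_iff_posSemidef.mp (IsSelfAdjoint.exp_nonneg hH))
    (Matrix.le_iff.mp (le_one_of_trace_eq_one hρ htr))
  calc Real.exp c ≤ (NormedSpace.exp H * ρ).trace.re := by
        have htangent_re := (Complex.le_def.mp htangent).1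
        rw [sub_mul, Matrix.trace_sub, smul_mul_assoc, add_mul, Algebra.algebraMap_eq_smul_one,
          smul_mul_assoc, one_mul, Matrix.trace_smul, Matrix.trace_add, Matrix.trace_smul, htr,
          Complex.zero_re, Complex.sub_re, Complex.smul_re, Complex.add_re, Complex.smul_re,
          Complex.one_re, ← hc, smul_eq_mul, smul_eq_mul] at htangent_re
        linarith
    _ ≤ (NormedSpace.exp H).trace.re := by
        simpa [mul_sub] using (Complex.le_def.mp hstate).1

end Matrices

section QuantumBound

open scoped Matrix.Norms.L2Operator MatrixOrder

variable {ι κ : Type*} [Fintype κ] [DecidableEq κ]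

/-- Existence of a quantum random access code for bit strings indexed by `ι`, with success
probability `p`. The states live on `ℂ ^ κ`, so `m` qubits correspond to `card κ = 2 ^ m`; `M b` is
the effect of the outcome `b`. -/
def HasQRAC (ι κ : Type*) [Fintype κ] [DecidableEq κ] (p : ℝ) : Prop :=
  ∃ ρ : (ι → Bool) → Matrix κ κ ℂ,
    (∀ x, (ρ x).PosSemidef ∧ (ρ x).trace = 1) ∧
    ∀ i : ι, ∃ M : Bool → Matrix κ κ ℂ,
      (∀ b, (M b).PosSemidef) ∧ M false + M true = 1 ∧
      ∀ (x : ι → Bool) (b : Bool), x i = b → p ≤ ((M b * ρ x).trace).re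

theorem HasQRAC.nonempty {p : ℝ} (h : HasQRAC ι κ p) : Nonempty κ := by
  obtain ⟨ρ, hρ, -⟩ := h
  by_contra hκ
  rw [not_nonempty_iff] at hκ
  simpa using (hρ fun _ ↦ true).2

theorem sum_trace_exp_sum_sign_smul_le [Fintype ι] [DecidableEq ι] [Nonempty κ]
    (A : ι → Matrix κ κ ℂ) :
    ∑ x : ι → Bool, (NormedSpace.exp (∑ i, sign (x i) • A i)).trace.re ≤
      Fintype.card κ * ∏ i, 2 * Real.cosh ‖A i‖ := by
  rw [← Complex.re_sum, ← Matrix.trace_sum]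
  exact (Complex.re_le_norm _).trans <| (norm_trace_le _).trans <| by
    gcongr
    exact norm_sum_exp_sum_sign_smul_le A

theorem two_mul_sub_one_le_sign_mul_trace {M : Bool → Matrix κ κ ℂ} {ρ : Matrix κ κ ℂ} {b : Bool}
    {p : ℝ} (hM : M false + M true = 1) (htr : ρ.trace = 1) (hp : p ≤ (M b * ρ).trace.re) :
    2 * p - 1 ≤ sign b * ((M true - M false) * ρ).trace.re := by
  have hsum : (M false * ρ).trace.re + (M true * ρ).trace.re = 1 := by
    rw [← Complex.add_re, ← Matrix.trace_add, ← add_mul, hM, one_mul, htr, Complex.one_re]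
  rw [sub_mul, Matrix.trace_sub, Complex.sub_re]
  cases b <;> simp only [sign, if_true, Bool.false_eq_true, if_false] <;> linarith

theorem HasQRAC.two_pow_mul_exp_le [Fintype ι] {p θ : ℝ} (h : HasQRAC ι κ p) (hθ : 0 ≤ θ) :
    2 ^ Fintype.card ι * Real.exp (θ * (Fintype.card ι * (2 * p - 1))) ≤
      Fintype.card κ * (2 * Real.cosh θ) ^ Fintype.card ι := by
  classical
  have := h.nonempty
  obtain ⟨ρ, hρ, hM⟩ := h
  choose M hMpos hMsum hMp using hM
  let A (i : ι) : Matrix κ κ ℂ := θ • (M i true - M i false)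
  have hherm (x : ι → Bool) : (∑ i, sign (x i) • A i).IsHermitian :=
    isSelfAdjoint_sum _ fun i _ ↦ .smul (.all _) <| .smul (.all _) <|
      (hMpos i true).1.isSelfAdjoint.sub (hMpos i false).1.isSelfAdjoint
  have htrace (x : ι → Bool) :
      θ * (Fintype.card ι * (2 * p - 1)) ≤ ((∑ i, sign (x i) • A i) * ρ x).trace.re := by
    calc θ * (Fintype.card ι * (2 * p - 1)) = ∑ _i : ι, θ * (2 * p - 1) := by
          simp only [sum_const, card_univ, nsmul_eq_mul]
          ring
      _ ≤ ∑ i, θ * (sign (x i) * ((M i true - M i false) * ρ x).trace.re) := by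
        gcongr with i
        exact two_mul_sub_one_le_sign_mul_trace (hMsum i) (hρ x).2 (hMp i x _ rfl)
      _ = ((∑ i, sign (x i) • A i) * ρ x).trace.re := by
        simp [A, sum_mul, Matrix.trace_sum, mul_left_comm]
  calc 2 ^ Fintype.card ι * Real.exp (θ * (Fintype.card ι * (2 * p - 1)))
      = ∑ _x : ι → Bool, Real.exp (θ * (Fintype.card ι * (2 * p - 1))) := by simp
    _ ≤ ∑ x : ι → Bool, (NormedSpace.exp (∑ i, sign (x i) • A i)).trace.re := by
      gcongr with x
      exact (Real.exp_le_exp.mpr (htrace x)).trans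
        (exp_trace_mul_le_trace_exp (hherm x) (hρ x).1 (hρ x).2)
    _ ≤ Fintype.card κ * ∏ i, 2 * Real.cosh ‖A i‖ := sum_trace_exp_sum_sign_smul_le A
    _ ≤ Fintype.card κ * ∏ _i : ι, 2 * Real.cosh θ := by
      gcongr with i
      rw [Real.cosh_le_cosh, abs_norm, norm_smul, Real.norm_eq_abs]
      exact mul_le_of_le_one_right (abs_nonneg θ)
        (norm_sub_le_one_of_add_eq_one (hMpos i false).nonneg (hMpos i true).nonneg (hMsum i))
    _ = Fintype.card κ * (2 * Real.cosh θ) ^ Fintype.card ι := by simp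

theorem HasQRAC.two_pow_mul_rpow_le [Fintype ι] {p r : ℝ} (h : HasQRAC ι κ p) (hr : 1 ≤ r) :
    2 ^ Fintype.card ι * r ^ (Fintype.card ι * p) ≤
      Fintype.card κ * (1 + r) ^ Fintype.card ι := by
  set θ := Real.log r / 2 with hθ
  have hexp : Real.exp (2 * θ) = r := by
    rw [hθ, mul_div_cancel₀ _ two_ne_zero, Real.exp_log (by positivity)]
  have hcosh : Real.exp θ * (2 * Real.cosh θ) = 1 + r := by
    rw [Real.cosh_eq, mul_div_cancel₀ _ two_ne_zero, mul_add, ← Real.exp_add, ← Real.exp_add,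
      ← two_mul, hexp, add_neg_cancel, Real.exp_zero, add_comm]
  have hbound := h.two_pow_mul_exp_le (div_nonneg (Real.log_nonneg hr) zero_le_two)
  calc 2 ^ Fintype.card ι * r ^ (Fintype.card ι * p)
      = Real.exp θ ^ Fintype.card ι *
          (2 ^ Fintype.card ι * Real.exp (θ * (Fintype.card ι * (2 * p - 1)))) := by
        rw [← hexp, ← Real.exp_mul, ← Real.exp_nat_mul, mul_left_comm (Real.exp _), ← Real.exp_add]
        ring_nf
    _ ≤ Real.exp θ ^ Fintype.card ι *
          (Fintype.card κ * (2 * Real.cosh θ) ^ Fintype.card ι) := by gcongr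
    _ = Fintype.card κ * (1 + r) ^ Fintype.card ι := by rw [mul_left_comm, ← mul_pow, hcosh]

end QuantumBound

section Binomial

theorem choose_succ_mul_pow_succ_mul (n j : ℕ) (r : ℝ) :
    n.choose (j + 1) * r ^ (j + 1) * (j + 1) = n.choose j * r ^ j * (r * (n - j)) := by
  have hchoose : (n.choose (j + 1) : ℝ) * (j + 1) = n.choose j * (n - j) := by
    rcases le_or_gt j n with hj | hj
    · rw [← Nat.cast_sub hj]
      exact_mod_cast Nat.choose_succ_right_eq n j
    · simp [Nat.choose_eq_zero_of_lt hj, Nat.choose_eq_zero_of_lt (hj.trans (Nat.lt_succ_self j))]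
  linear_combination r ^ (j + 1) * hchoose

theorem choose_mul_pow_le_choose_mul_pow {n k : ℕ} {r : ℝ} (hr : 0 ≤ r)
    (hup : r * (n - k) ≤ k + 1) (hdown : k ≤ r * (n - k + 1)) (j : ℕ) :
    n.choose j * r ^ j ≤ n.choose k * r ^ k := by
  rcases le_total j k with hjk | hkj
  · refine monotoneOn_of_le_succ (f := fun j ↦ (n.choose j : ℝ) * r ^ j) Set.ordConnected_Iic
      (fun i _ _ hik ↦ ?_) hjk Set.self_mem_Iic hjk
    have hik : (i : ℝ) + 1 ≤ k := by exact_mod_cast hik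
    refine le_of_mul_le_mul_right ?_ (by positivity : (0 : ℝ) < i + 1)
    rw [Nat.succ_eq_succ, Nat.succ_eq_add_one, choose_succ_mul_pow_succ_mul]
    gcongr
    nlinarith
  · refine antitoneOn_of_succ_le (f := fun j ↦ (n.choose j : ℝ) * r ^ j) Set.ordConnected_Ici
      (fun i _ hki _ ↦ ?_) Set.self_mem_Ici hkj hkj
    have hki : (k : ℝ) ≤ i := by exact_mod_cast hki
    refine le_of_mul_le_mul_right ?_ (by positivity : (0 : ℝ) < i + 1)
    rw [Nat.succ_eq_succ, Nat.succ_eq_add_one, choose_succ_mul_pow_succ_mul]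
    gcongr
    nlinarith

theorem one_add_pow_le_choose_mul_pow {n k : ℕ} {r : ℝ} (hr : 0 ≤ r)
    (hup : r * (n - k) ≤ k + 1) (hdown : k ≤ r * (n - k + 1)) :
    (1 + r) ^ n ≤ (n + 1) * (n.choose k * r ^ k) := by
  calc (1 + r) ^ n = ∑ j ∈ range (n + 1), n.choose j * r ^ j := by
        rw [add_comm, add_pow]
        simp [mul_comm]
    _ ≤ ∑ _j ∈ range (n + 1), n.choose k * r ^ k :=
        sum_le_sum fun j _ ↦ choose_mul_pow_le_choose_mul_pow hr hup hdown j
    _ = (n + 1) * (n.choose k * r ^ k) := by simp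

theorem two_pow_le_mul_choose {n k : ℕ} {p d : ℝ} (hd : 0 ≤ d) (hkn : k ≤ n) (hnk : n ≤ 2 * k)
    (hkp : k ≤ n * p + 1)
    (hbound : ∀ r : ℝ, 1 ≤ r → 2 ^ n * r ^ (n * p) ≤ d * (1 + r) ^ n) :
    (2 : ℝ) ^ n ≤ d * (n + 1) ^ 2 * n.choose k := by
  have hkn' : (k : ℝ) ≤ n := by exact_mod_cast hkn
  have hnk' : (n : ℝ) ≤ 2 * k := by exact_mod_cast hnk
  have hden : (0 : ℝ) < n - k + 1 := by linarith
  -- This `r` makes `k` the mode of the weights `j ↦ n.choose j * r ^ j`.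
  set r : ℝ := (k + 1) / (n - k + 1) with hr
  have hr1 : 1 ≤ r := by rw [hr, one_le_div hden]; linarith
  have hrmul : r * (n - k + 1) = k + 1 := div_mul_cancel₀ _ hden.ne'
  have hrn : r ≤ n + 1 := by nlinarith
  have hr0 : 0 < r := by linarith
  refine le_of_mul_le_mul_right ?_ (pow_pos hr0 k)
  calc 2 ^ n * r ^ k ≤ 2 ^ n * (r ^ (n * p) * r) := by
        rw [← Real.rpow_natCast r, ← Real.rpow_add_one hr0.ne']
        gcongr 2 ^ n * ?_
        exact Real.rpow_le_rpow_of_exponent_le hr1 hkp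
    _ = 2 ^ n * r ^ (n * p) * r := by ring
    _ ≤ d * ((n + 1) * (n.choose k * r ^ k)) * (n + 1) := by
        gcongr ?_ * ?_
        refine (hbound r hr1).trans ?_
        gcongr
        exact one_add_pow_le_choose_mul_pow hr0.le (by linarith) (by linarith)
    _ = d * (n + 1) ^ 2 * n.choose k * r ^ k := by ring

end Binomial

section ClassicalCode

/-- Existence of a classical random access code for bit strings indexed by `ι`, with message set `T`
and success probability `q`. `Enc x z` is the probability of sending `z` on input `x`, and `g i z b`
the probability that the decoder of the `i`-th bit answers `b` on receiving `z`. -/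
def HasRAC (ι T : Type*) [Fintype T] (q : ℝ) : Prop :=
  ∃ (Enc : (ι → Bool) → T → ℝ) (g : ι → T → Bool → ℝ),
    (∀ x, (∀ z, 0 ≤ Enc x z) ∧ ∑ z, Enc x z = 1) ∧
    (∀ i z, (∀ b, 0 ≤ g i z b) ∧ g i z false + g i z true = 1) ∧
    ∀ (x : ι → Bool) (i : ι), q ≤ ∑ z, Enc x z * g i z (x i)

theorem HasRAC.mono {ι T : Type*} [Fintype T] {q q' : ℝ} (h : HasRAC ι T q) (hq : q' ≤ q) :
    HasRAC ι T q' :=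
  let ⟨Enc, g, hEnc, hg, hsucc⟩ := h
  ⟨Enc, g, hEnc, hg, fun x i ↦ hq.trans (hsucc x i)⟩

theorem hasRAC_of_codebook {ι T : Type*} [Fintype T] {q : ℝ} (c : T → ι → Bool)
    (B : (ι → Bool) → Finset T) (hB : ∀ x, (B x).Nonempty)
    (hq : ∀ x i, q * #(B x) ≤ #{t ∈ B x | c t i = x i}) : HasRAC ι T q := by
  classical
  have hcard (x) : (0 : ℝ) < #(B x) := by exact_mod_cast (hB x).card_pos
  refine ⟨fun x t ↦ if t ∈ B x then (#(B x) : ℝ)⁻¹ else 0,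
    fun i t b ↦ if c t i = b then 1 else 0, fun x ↦ ⟨fun t ↦ by positivity, ?_⟩,
    fun i t ↦ ⟨fun b ↦ by positivity, by cases h : c t i <;> simp [h]⟩, fun x i ↦ ?_⟩
  · simp [(hcard x).ne']
  · calc q ≤ #{t ∈ B x | c t i = x i} * (#(B x) : ℝ)⁻¹ := by
          rw [← div_eq_mul_inv, le_div_iff₀ (hcard x)]
          exact hq x i
      _ = ∑ t, (if t ∈ B x then (#(B x) : ℝ)⁻¹ else 0) * if c t i = x i then 1 else 0 := by
          simp only [ite_mul, zero_mul, sum_ite_mem, univ_inter, ← mul_sum, sum_boole, mul_comm]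

theorem natCast_mul_two_pow_lt_exp {n : ℕ} {y : ℝ} (hy : 2 * n ≤ y) : n * 2 ^ n < Real.exp y := by
  have htwo : (2 : ℝ) ^ n ≤ Real.exp n := by
    rw [← Real.exp_one_pow]
    gcongr
    linarith [Real.add_one_le_exp (1 : ℝ)]
  calc (n : ℝ) * 2 ^ n < 2 ^ n * 2 ^ n := by
        gcongr
        exact_mod_cast Nat.lt_two_pow_self
    _ ≤ Real.exp n * Real.exp n := by gcongr
    _ = Real.exp (2 * n) := by rw [← Real.exp_add, two_mul]
    _ ≤ Real.exp y := Real.exp_le_exp.mpr hy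

theorem exists_forall_sum_neg {J Ω T : Type*} [Fintype J] [Fintype Ω] [Fintype T] [Nonempty Ω]
    (f : J → Ω → ℝ) {δ : ℝ}
    (hf : ∀ j, ∑ ω, Real.exp (f j ω) ≤ Fintype.card Ω * Real.exp (-δ))
    (hJ : Fintype.card J < Real.exp (Fintype.card T * δ)) :
    ∃ c : T → Ω, ∀ j, ∑ t, f j (c t) < 0 := by
  classical
  have hmgf (j : J) : ∑ c : T → Ω, Real.exp (∑ t, f j (c t)) ≤
      Fintype.card Ω ^ Fintype.card T * Real.exp (-(Fintype.card T * δ)) := by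
    calc ∑ c : T → Ω, Real.exp (∑ t, f j (c t))
        = (∑ ω, Real.exp (f j ω)) ^ Fintype.card T := by
          simp only [Real.exp_sum]
          rw [← Fintype.prod_sum fun (_ : T) ω ↦ Real.exp (f j ω), prod_const, card_univ]
      _ ≤ (Fintype.card Ω * Real.exp (-δ)) ^ Fintype.card T := by
          gcongr
          exact hf j
      _ = _ := by rw [mul_pow, ← Real.exp_nat_mul, mul_neg]
  -- Averaging over all `c`, some `c` makes every term `exp (∑ t, f j (c t))` less than `1`.
  have hunion : ∑ c : T → Ω, ∑ j, Real.exp (∑ t, f j (c t)) < ∑ _c : T → Ω, (1 : ℝ) := by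
    calc ∑ c : T → Ω, ∑ j, Real.exp (∑ t, f j (c t))
        = ∑ j, ∑ c : T → Ω, Real.exp (∑ t, f j (c t)) := sum_comm
      _ ≤ ∑ _j : J, Fintype.card Ω ^ Fintype.card T * Real.exp (-(Fintype.card T * δ)) :=
          sum_le_sum fun j _ ↦ hmgf j
      _ = Fintype.card Ω ^ Fintype.card T *
            (Fintype.card J * Real.exp (-(Fintype.card T * δ))) := by
          simp only [sum_const, card_univ, nsmul_eq_mul]
          ring
      _ < Fintype.card Ω ^ Fintype.card T * 1 := by
          gcongr
          rwa [Real.exp_neg, ← div_eq_mul_inv, div_lt_one (Real.exp_pos _)]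
      _ = ∑ _c : T → Ω, (1 : ℝ) := by simp
  obtain ⟨c, -, hc⟩ := exists_lt_of_sum_lt hunion
  refine ⟨c, fun j ↦ Real.exp_lt_one_iff.mp (lt_of_le_of_lt ?_ hc)⟩
  exact single_le_sum (f := fun j ↦ Real.exp (∑ t, f j (c t)))
    (fun _ _ ↦ (Real.exp_pos _).le) (mem_univ j)

section Agreement

variable {ι : Type*} [Fintype ι] [DecidableEq ι]

theorem card_powersetCard_filter_notMem_mul (i : ι) (k : ℕ) :
    #{s ∈ powersetCard k (univ : Finset ι) | i ∉ s} * Fintype.card ι =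
      (Fintype.card ι).choose k * (Fintype.card ι - k) := by
  have herase : {s ∈ powersetCard k (univ : Finset ι) | i ∉ s} =
      powersetCard k (univ.erase i) := by
    ext s
    simp [mem_powersetCard, subset_erase, and_comm]
  have hcard : Fintype.card ι - 1 + 1 = Fintype.card ι :=
    Nat.sub_add_cancel (Fintype.card_pos_iff.mpr ⟨i⟩)
  rw [herase, card_powersetCard, card_erase_of_mem (mem_univ i),
    card_univ]
  simpa only [hcard] using Nat.choose_mul_succ_eq (Fintype.card ι - 1) k

theorem sum_powersetCard_sub_ite_mem (i : ι) {k : ℕ} (hk : k ≤ Fintype.card ι) :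
    ∑ s ∈ powersetCard k univ,
      ((k : ℝ) / Fintype.card ι - if i ∈ s then 1 else 0) = 0 := by
  have hpos : (0 : ℝ) < Fintype.card ι := by exact_mod_cast Fintype.card_pos_iff.mpr ⟨i⟩
  have hcount := card_powersetCard_filter_notMem_mul i k
  rw [← Nat.cast_inj (R := ℝ)] at hcount
  push_cast [hk] at hcount
  calc ∑ s ∈ powersetCard k univ,
        ((k : ℝ) / Fintype.card ι - if i ∈ s then 1 else 0)
      = ∑ s ∈ powersetCard k univ,
          ((if i ∉ s then 1 else 0) - (1 - (k : ℝ) / Fintype.card ι)) :=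
        sum_congr rfl fun s _ ↦ by by_cases hi : i ∈ s <;> simp [hi]
    _ = #{s ∈ powersetCard k (univ : Finset ι) | i ∉ s} -
          (Fintype.card ι).choose k * (1 - (k : ℝ) / Fintype.card ι) := by
        rw [sum_sub_distrib, sum_boole, sum_const, nsmul_eq_mul,
          card_powersetCard, card_univ]
    _ = 0 := by
        field_simp
        linarith

theorem sum_powersetCard_exp_le {η : ℝ} (hη0 : 0 ≤ η) (hη1 : η ≤ 1) (i : ι) {k : ℕ}
    (hk : k ≤ Fintype.card ι) :
    ∑ s ∈ powersetCard k univ,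
        Real.exp (η / 8 * (k / Fintype.card ι - η - if i ∈ s then 1 else 0)) ≤
      (Fintype.card ι).choose k * (1 - η ^ 2 / 16) := by
  have hfrac : (k : ℝ) / Fintype.card ι ≤ 1 := div_le_one_of_le₀ (by exact_mod_cast hk) (by simp)
  have hfrac0 : 0 ≤ (k : ℝ) / Fintype.card ι := by positivity
  -- The factor `η / 8` makes the drift `-η ^ 2 / 8` outweigh the second-order term `η ^ 2 / 16`.
  have hexp (s : Finset ι) :
      Real.exp (η / 8 * (k / Fintype.card ι - η - if i ∈ s then 1 else 0)) ≤
        (1 - η ^ 2 / 16) + η / 8 * ((k : ℝ) / Fintype.card ι - if i ∈ s then 1 else 0) := by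
    set y : ℝ := k / Fintype.card ι - η - if i ∈ s then 1 else 0 with hy
    have hy2 : |y| ≤ 2 := by
      rw [abs_le, hy]
      constructor <;> split_ifs <;> linarith
    have habs : |η / 8 * y| ≤ η / 4 := by
      rw [abs_mul, abs_of_nonneg (by positivity)]
      nlinarith
    have htaylor := (abs_le.mp (Real.abs_exp_sub_one_sub_id_le (habs.trans (by linarith)))).2
    have hsq : (η / 8 * y) ^ 2 ≤ (η / 4) ^ 2 := sq_le_sq' (abs_le.mp habs).1 (abs_le.mp habs).2
    linarith
  calc _ ≤ ∑ s ∈ powersetCard k univ,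
        ((1 - η ^ 2 / 16) + η / 8 * ((k : ℝ) / Fintype.card ι - if i ∈ s then 1 else 0)) :=
        sum_le_sum fun s _ ↦ hexp s
    _ = (Fintype.card ι).choose k * (1 - η ^ 2 / 16) := by
        rw [sum_add_distrib, ← mul_sum, sum_powersetCard_sub_ite_mem i hk, mul_zero,
          add_zero, sum_const, nsmul_eq_mul, card_powersetCard, card_univ]

theorem sum_exp_ite_card_eq_le {η : ℝ} (hη0 : 0 ≤ η) (hη1 : η ≤ 1) (i : ι) {k : ℕ}
    (hk : k ≤ Fintype.card ι) :
    ∑ s : Finset ι, Real.exp (if #s = k then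
        η / 8 * (k / Fintype.card ι - η - if i ∈ s then 1 else 0) else 0) ≤
      2 ^ Fintype.card ι *
        Real.exp (-((Fintype.card ι).choose k * (η ^ 2 / 16) / 2 ^ Fintype.card ι)) := by
  calc _ = ∑ s ∈ powersetCard k univ,
          (Real.exp (η / 8 * (k / Fintype.card ι - η - if i ∈ s then 1 else 0)) - 1) +
          ∑ _s : Finset ι, 1 := by
        rw [powersetCard_eq_filter, powerset_univ, sum_filter,
          ← sum_add_distrib]
        refine sum_congr rfl fun s _ ↦ ?_
        split_ifs <;> simp
    _ ≤ 2 ^ Fintype.card ι *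
          (-((Fintype.card ι).choose k * (η ^ 2 / 16) / 2 ^ Fintype.card ι) + 1) := by
        have := sum_powersetCard_exp_le hη0 hη1 i hk
        rw [sum_sub_distrib, sum_const, sum_const, card_powersetCard,
          card_univ, card_univ, Fintype.card_finset, nsmul_eq_mul, nsmul_eq_mul,
          mul_one, mul_one, Nat.cast_pow, Nat.cast_ofNat, mul_add, mul_neg,
          mul_div_cancel₀ _ (by positivity)]
        linarith
    _ ≤ _ := by
        gcongr
        exact Real.add_one_le_exp _

/-- The set of places where a string agrees with `x`, as a bijection: for a uniformly random string
it is a uniformly random set. -/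
@[simps]
def agreement (x : ι → Bool) : (ι → Bool) ≃ Finset ι where
  toFun z := {j | z j = x j}
  invFun s j := if j ∈ s then x j else !x j
  left_inv z := by
    ext j
    cases hz : z j <;> cases hx : x j <;> simp [hz, hx]
  right_inv s := by
    ext j
    by_cases hj : j ∈ s <;> simp [hj]

theorem exists_codebook {T : Type*} [Fintype T] {η : ℝ} (hη0 : 0 < η) (hη1 : η ≤ 1) {k : ℕ}
    (hk : k ≤ Fintype.card ι)
    (hT : 2 * Fintype.card ι * 2 ^ Fintype.card ι ≤
      Fintype.card T * ((Fintype.card ι).choose k * (η ^ 2 / 16))) :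
    ∃ c : T → ι → Bool, ∀ x i,
      (k / Fintype.card ι - η) * #{t | #(agreement x (c t)) = k} <
        #{t | #(agreement x (c t)) = k ∧ c t i = x i} := by
  let defect (i : ι) (s : Finset ι) : ℝ :=
    if #s = k then η / 8 * (k / Fintype.card ι - η - if i ∈ s then 1 else 0) else 0
  have hmgf (xi : (ι → Bool) × ι) : ∑ z, Real.exp (defect xi.2 (agreement xi.1 z)) ≤
      Fintype.card (ι → Bool) *
        Real.exp (-((Fintype.card ι).choose k * (η ^ 2 / 16) / 2 ^ Fintype.card ι)) := by
    rw [(agreement xi.1).sum_comp fun s ↦ Real.exp (defect xi.2 s)]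
    simpa using sum_exp_ite_card_eq_le hη0.le hη1 xi.2 hk
  obtain ⟨c, hc⟩ := exists_forall_sum_neg (T := T) _ hmgf <| by
    rw [mul_div_assoc', mul_comm]
    have := natCast_mul_two_pow_lt_exp ((le_div_iff₀ (by positivity)).mpr hT)
    simpa [mul_comm] using this
  refine ⟨c, fun x i ↦ ?_⟩
  have hsum : ∑ t, defect i (agreement x (c t)) =
      η / 8 * ((k / Fintype.card ι - η) * #{t | #(agreement x (c t)) = k} -
        #{t | #(agreement x (c t)) = k ∧ c t i = x i}) := by
    rw [← filter_filter, ← sum_filter, ← mul_sum, sum_sub_distrib,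
      ← sum_boole, sum_const, nsmul_eq_mul]
    simp [mul_comm]
  have hneg := hsum ▸ hc (x, i)
  exact sub_neg.mp (neg_of_mul_neg_right hneg (by positivity))

end Agreement

theorem hasRAC_of_le_card_mul_choose {ι T : Type*} [Fintype ι] [Nonempty ι] [Fintype T] {η : ℝ}
    (hη0 : 0 < η) (hη1 : η ≤ 1) {k : ℕ} (hk : k ≤ Fintype.card ι)
    (hT : 2 * Fintype.card ι * 2 ^ Fintype.card ι ≤
      Fintype.card T * ((Fintype.card ι).choose k * (η ^ 2 / 16))) :
    HasRAC ι T (k / Fintype.card ι - η) := by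
  classical
  obtain ⟨c, hc⟩ := exists_codebook (T := T) hη0 hη1 hk hT
  refine hasRAC_of_codebook c (fun x ↦ {t | #(agreement x (c t)) = k}) (fun x ↦ ?_)
    fun x i ↦ ?_
  · by_contra hempty
    have hlt := hc x (Classical.arbitrary ι)
    rw [← filter_filter, not_nonempty_iff_eq_empty.mp hempty] at hlt
    simp at hlt
  · simpa [filter_filter] using (hc x i).le

end ClassicalCode

section Simulation

variable {ι κ : Type*} [Fintype ι] [Fintype κ] [DecidableEq κ] {p η : ℝ}

theorem HasQRAC.exists_two_pow_le_mul_choose (h : HasQRAC ι κ p) (hp : 1 / 2 ≤ p) (hp1 : p ≤ 1) :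
    ∃ k ≤ Fintype.card ι, Fintype.card ι * p ≤ k ∧
      (2 : ℝ) ^ Fintype.card ι ≤
        Fintype.card κ * (Fintype.card ι + 1) ^ 2 * (Fintype.card ι).choose k := by
  have hle : ⌈Fintype.card ι * p⌉₊ ≤ Fintype.card ι :=
    Nat.ceil_le.mpr (mul_le_of_le_one_right (Nat.cast_nonneg _) hp1)
  have hge := Nat.le_ceil (Fintype.card ι * p)
  have hhalf : Fintype.card ι ≤ 2 * ⌈Fintype.card ι * p⌉₊ := by
    rw [← Nat.cast_le (α := ℝ), Nat.cast_mul, Nat.cast_ofNat]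
    nlinarith [Nat.cast_nonneg (α := ℝ) (Fintype.card ι)]
  exact ⟨_, hle, hge, two_pow_le_mul_choose (Nat.cast_nonneg _) hle hhalf
    (Nat.ceil_lt_add_one (by positivity)).le fun r hr ↦ h.two_pow_mul_rpow_le hr⟩

theorem logb_two_mul_cube_mul_div_sq {n d : ℝ} (hn : n ≠ 0) (hd : d ≠ 0) (hη : η ≠ 0) :
    Real.logb 2 (128 * n ^ 3 * d / η ^ 2) =
      7 + 3 * Real.logb 2 n + Real.logb 2 d + 2 * Real.logb 2 (1 / η) := by
  rw [Real.logb_div (by positivity) (by positivity), Real.logb_mul (by positivity) hd,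
    Real.logb_mul (by norm_num) (by positivity), Real.logb_pow, Real.logb_pow, one_div,
    Real.logb_inv, show (128 : ℝ) = 2 ^ 7 by norm_num, Real.logb_pow,
    Real.logb_self_eq_one one_lt_two]
  push_cast
  ring

theorem HasQRAC.hasRAC_of_le_two_pow [Nonempty ι] (h : HasQRAC ι κ p) (hp : 1 / 2 ≤ p)
    (hp1 : p ≤ 1) (hη0 : 0 < η) (hη1 : η ≤ 1) {m : ℕ}
    (hm : 128 * (Fintype.card ι : ℝ) ^ 3 * Fintype.card κ / η ^ 2 ≤ 2 ^ m) :
    HasRAC ι (Fin m → Bool) (p - η) := by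
  obtain ⟨k, hk, hpk, hchoose⟩ := h.exists_two_pow_le_mul_choose hp hp1
  have hn : (1 : ℝ) ≤ Fintype.card ι := by exact_mod_cast Fintype.card_pos (α := ι)
  have hrate : p ≤ k / Fintype.card ι := by
    rw [le_div_iff₀ (by positivity)]
    linarith
  refine (hasRAC_of_le_card_mul_choose hη0 hη1 hk ?_).mono (by gcongr)
  calc (2 : ℝ) * Fintype.card ι * 2 ^ Fintype.card ι
      ≤ 2 * Fintype.card ι * (Fintype.card κ * (Fintype.card ι + Fintype.card ι) ^ 2 *
          (Fintype.card ι).choose k) := by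
        gcongr
        refine hchoose.trans ?_
        gcongr
    _ = 128 * (Fintype.card ι : ℝ) ^ 3 * Fintype.card κ / η ^ 2 *
          ((Fintype.card ι).choose k * (η ^ 2 / 16)) := by
        field_simp
        ring
    _ ≤ Fintype.card (Fin m → Bool) * ((Fintype.card ι).choose k * (η ^ 2 / 16)) := by
        gcongr
        simpa using hm

end Simulation

end RandomAccessCode

theorem qrac_to_rac_general {ι κ : Type*} [Fintype ι] [Nontrivial ι] [Fintype κ]
    [DecidableEq κ] {p η : ℝ} (hp : 1 / 2 ≤ p) (hp1 : p ≤ 1) (hη0 : 0 < η) (hη1 : η ≤ 1)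
    (h : RandomAccessCode.HasQRAC ι κ p) :
    ∃ m : ℕ, (m : ℝ) ≤ Real.logb 2 (Fintype.card κ) +
        11 * (Real.logb 2 (Fintype.card ι) + Real.logb 2 (1 / η)) ∧
      RandomAccessCode.HasRAC ι (Fin m → Bool) (p - η) := by
  have := h.nonempty
  have hn : (2 : ℝ) ≤ Fintype.card ι := by exact_mod_cast Fintype.one_lt_card (α := ι)
  have hd : (1 : ℝ) ≤ Fintype.card κ := by exact_mod_cast Fintype.card_pos (α := κ)
  have hlogn : 1 ≤ Real.logb 2 (Fintype.card ι) := by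
    rwa [Real.le_logb_iff_rpow_le one_lt_two (by positivity), Real.rpow_one]
  have hlogd : 0 ≤ Real.logb 2 (Fintype.card κ) := Real.logb_nonneg one_lt_two hd
  have hlogη : 0 ≤ Real.logb 2 (1 / η) := Real.logb_nonneg one_lt_two (one_le_one_div hη0 hη1)
  set N : ℝ := 128 * (Fintype.card ι : ℝ) ^ 3 * Fintype.card κ / η ^ 2 with hN
  have hlogN : Real.logb 2 N = 7 + 3 * Real.logb 2 (Fintype.card ι) +
      Real.logb 2 (Fintype.card κ) + 2 * Real.logb 2 (1 / η) :=
    RandomAccessCode.logb_two_mul_cube_mul_div_sq (by positivity) (by positivity) hη0.ne'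
  refine ⟨⌈Real.logb 2 N⌉₊, ?_, h.hasRAC_of_le_two_pow hp hp1 hη0 hη1 ?_⟩
  · linarith [Nat.ceil_lt_add_one (a := Real.logb 2 N) (by linarith)]
  · rw [← hN, ← Real.rpow_natCast, ← Real.logb_le_iff_le_rpow one_lt_two (by positivity)]
    exact Nat.le_ceil _

/-- There is a universal constant `C > 0` such that for all `n ≥ 2`, `m ≥ 1`,
`p ∈ [1/2,1]` and `η ∈ (0,1)`: if an (n,m,p)-QRAC exists, then an
(n, m', 1 − 2p(1−p) − η)-classical RAC exists for some
`m' ≤ m + C·(log₂ n + log₂(1/η))`. -/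
theorem qrac_to_rac :
    ∃ C : ℝ, 0 < C ∧
      ∀ (n m : ℕ) (p η : ℝ), 2 ≤ n → 1 ≤ m → 1 / 2 ≤ p → p ≤ 1 → 0 < η → η < 1 →
        (∃ ρ : (Fin n → Bool) → Matrix (Fin (2 ^ m)) (Fin (2 ^ m)) ℂ,
          (∀ x, (ρ x).PosSemidef ∧ (ρ x).trace = 1) ∧
          ∀ i : Fin n, ∃ M : Bool → Matrix (Fin (2 ^ m)) (Fin (2 ^ m)) ℂ,
            (∀ b, (M b).PosSemidef) ∧ M false + M true = 1 ∧
            ∀ (x : Fin n → Bool) (b : Bool), x i = b → p ≤ ((M b * ρ x).trace).re) →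
        ∃ m' : ℕ, (m' : ℝ) ≤ (m : ℝ) + C * (Real.logb 2 n + Real.logb 2 (1 / η)) ∧
          ∃ (Enc : (Fin n → Bool) → (Fin m' → Bool) → ℝ)
            (g : Fin n → (Fin m' → Bool) → Bool → ℝ),
            (∀ x, (∀ z, 0 ≤ Enc x z) ∧ ∑ z, Enc x z = 1) ∧
            (∀ i z, (∀ b, 0 ≤ g i z b) ∧ g i z false + g i z true = 1) ∧
            ∀ (x : Fin n → Bool) (i : Fin n),
              1 - 2 * p * (1 - p) - η ≤ ∑ z, Enc x z * g i z (x i) := by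
  refine ⟨11, by norm_num, fun n m p η hn _ hp hp1 hη0 hη1 hQ ↦ ?_⟩
  have : Nontrivial (Fin n) := Fin.nontrivial_iff_two_le.mpr hn
  have hrate : 1 - 2 * p * (1 - p) ≤ p := by nlinarith
  obtain ⟨m', hm', hRAC⟩ := qrac_to_rac_general hp hp1 hη0 hη1.le hQ
  exact ⟨m', by simpa [Real.logb_pow] using hm', hRAC.mono (sub_le_sub_right hrate η)⟩
end

section
/- Let X and Y be finite nonempty sets, let E : X → (probability distributions on Y) be a classical channel, and suppose σ is a probability distribution on Y and c ≥ 0 is a real number such that E(x)(y) ≤ 2^c · σ(y) for all x ∈ X and y ∈ Y. Then for every η ∈ (0,1) there exist a finite nonempty set R with a probability distribution μ on R (the shared randomness), a natural number N ≤ ⌈2^c · ln(1/η)⌉ + 1, a message function M : X × R → {1,…,N}, and an output function g : {1,…,N} × R → Y, such that for every x ∈ X the total variation distance between the distribution of g(M(x,r), r) when r ∼ μ and the distribution E(x) is at most η. -/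
open BigOperators

/-!
Rejection sampling from the shared randomness: in each round a proposal `y ∼ σ` is drawn and the
sender accepts it with probability `2⁻ᶜ E(x)(y) / σ(y) ≤ 1`. A round accepts with total probability
`q = 2⁻ᶜ`, and conditionally on acceptance the proposal has law `E(x)`. The message is the index of
the first accepted round, or one extra symbol if all `n` rounds reject, which has probability
`(1 - q)ⁿ < exp (-q n) ≤ η` for `n = ⌈2ᶜ ln (1/η)⌉`.

The acceptance coins can be tossed with a single uniform variable on `{0, …, L - 1}` per round,
shared by all inputs `x`, after rounding the acceptance probabilities down to multiples of `1 / L`.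
The rounding costs at most `2ᶜ / L` in total variation, which the strict inequality above absorbs
for large `L`. So the randomness is finite however many inputs there are.
-/

universe u v

section Distributions

variable {Y : Type*} [Fintype Y]

/-- The total variation distance of two distributions on a finite type, given by their weights. -/
noncomputable def tvDist (P Q : Y → ℝ) : ℝ :=
  (1 / 2) * ∑ y, |P y - Q y|

lemma tvDist_le_sum_of_le_add {P Q ε : Y → ℝ} (hPQ : ∑ y, P y = ∑ y, Q y) (hε : ∀ y, 0 ≤ ε y)
    (h : ∀ y, Q y ≤ P y + ε y) : tvDist P Q ≤ ∑ y, ε y := by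
  have habs (y : Y) : |P y - Q y| ≤ P y - Q y + 2 * ε y :=
    abs_le.2 ⟨by linarith [h y], by linarith [hε y]⟩
  have hsum : ∑ y, |P y - Q y| ≤ 2 * ∑ y, ε y := calc
    ∑ y, |P y - Q y| ≤ ∑ y, (P y - Q y + 2 * ε y) := Finset.sum_le_sum fun y _ => habs y
    _ = 2 * ∑ y, ε y := by
      rw [Finset.sum_add_distrib, Finset.sum_sub_distrib, hPQ, sub_self, zero_add, Finset.mul_sum]
  unfold tvDist
  linarith

lemma nonempty_of_stdSimplex (P : stdSimplex ℝ Y) : Nonempty Y := by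
  by_contra h
  rw [not_nonempty_iff] at h
  simpa using stdSimplex.sum_eq_one P

lemma stdSimplex_map_apply {R : Type*} [Fintype R] [DecidableEq Y] (f : R → Y)
    (μ : stdSimplex ℝ R) (y : Y) :
    stdSimplex.map f μ y = ∑ r, μ r * if f r = y then 1 else 0 := by
  simp [FunOnFinite.linearMap_apply_apply, Finset.sum_filter]

/-- The joint distribution of two independent variables with distributions `μ` and `ν`. -/
def prodDist {R S : Type*} [Fintype R] [Fintype S] (μ : stdSimplex ℝ R) (ν : stdSimplex ℝ S) :
    stdSimplex ℝ (R × S) :=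
  ⟨fun r => μ r.1 * ν r.2,
    fun r => mul_nonneg (stdSimplex.zero_le μ r.1) (stdSimplex.zero_le ν r.2),
    by simp [Fintype.sum_prod_type, ← Finset.mul_sum]⟩

end Distributions

/-- A one-way protocol simulating a channel from `X` to `Y` with `N` messages: the sender maps the
input and the shared randomness to a message, which the receiver decodes using the same randomness.
The randomness lives in the universe of `Y`, since proposals drawn from `Y` will be part of it. -/
structure SharedRandomnessProtocol (X : Type u) (Y : Type v) (N : ℕ) where
  Rand : Type v
  [fintypeRand : Fintype Rand]
  dist : stdSimplex ℝ Rand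
  message : X → Rand → Fin N
  decode : Fin N → Rand → Y

/-- One round of rejection sampling: a shared coin determines a proposed output, and each input
`x` accepts the proposal on its own set of coins. -/
structure RejectionRound (X : Type u) (Y : Type v) where
  Coin : Type v
  [fintypeCoin : Fintype Coin]
  [decidableEqCoin : DecidableEq Coin]
  dist : stdSimplex ℝ Coin
  proposal : Coin → Y
  accept : X → Finset Coin

attribute [instance] SharedRandomnessProtocol.fintypeRand RejectionRound.fintypeCoin
  RejectionRound.decidableEqCoin

section RejectionSampling

variable {X : Type u} {Y : Type v}

namespace SharedRandomnessProtocol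

variable {N : ℕ}

/-- The receiver's output on input `x` and shared randomness `r`. -/
def output (P : SharedRandomnessProtocol X Y N) (x : X) (r : P.Rand) : Y :=
  P.decode (P.message x r) r

/-- The distribution of the receiver's output on input `x`. -/
noncomputable def law [Fintype Y] (P : SharedRandomnessProtocol X Y N) (x : X) : stdSimplex ℝ Y :=
  stdSimplex.map (P.output x) P.dist

lemma law_apply [Fintype Y] [DecidableEq Y] (P : SharedRandomnessProtocol X Y N) (x : X) (y : Y) :
    P.law x y = ∑ r, P.dist r * if P.output x r = y then 1 else 0 :=
  stdSimplex_map_apply _ _ _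

lemma exists_fin_rand [Fintype Y] [DecidableEq Y] (P : SharedRandomnessProtocol X Y N) :
    ∃ K : ℕ, 0 < K ∧ ∃ (μ : stdSimplex ℝ (Fin K)) (M : X → Fin K → Fin N) (g : Fin N → Fin K → Y),
      ∀ x y, ∑ r, μ r * (if g (M x r) r = y then (1 : ℝ) else 0) = P.law x y := by
  have := nonempty_of_stdSimplex P.dist
  let e := Fintype.equivFin P.Rand
  refine ⟨Fintype.card P.Rand, Fintype.card_pos, stdSimplex.map e P.dist,
    fun x i => P.message x (e.symm i), fun m i => P.decode m (e.symm i), fun x y => ?_⟩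
  have hcomp : (fun i => P.output x (e.symm i)).comp e = P.output x :=
    funext fun r => congrArg (P.output x) (e.symm_apply_apply r)
  calc _ = stdSimplex.map (fun i => P.output x (e.symm i)) (stdSimplex.map e P.dist) y :=
        (stdSimplex_map_apply _ _ _).symm
    _ = P.law x y := by rw [stdSimplex.map_comp_apply, hcomp, law]

/-- The protocol which ignores its single message and always outputs `y₀`. -/
noncomputable def const (X : Type u) (y₀ : Y) : SharedRandomnessProtocol X Y 1 where
  Rand := PUnit
  dist := stdSimplex.vertex PUnit.unit
  message _ _ := 0
  decode _ _ := y₀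

lemma law_const [Fintype Y] [DecidableEq Y] (y₀ : Y) (x : X) :
    (const X y₀).law x = stdSimplex.vertex y₀ :=
  stdSimplex.map_vertex (fun _ : PUnit => y₀) PUnit.unit

/-- Message `0` announces that the proposal of the round `T` is accepted; otherwise `P` is run,
with its messages shifted by one. -/
def prepend (T : RejectionRound X Y) (P : SharedRandomnessProtocol X Y N) :
    SharedRandomnessProtocol X Y (N + 1) where
  Rand := T.Coin × P.Rand
  dist := prodDist T.dist P.dist
  message x r := if r.1 ∈ T.accept x then 0 else (P.message x r.2).succ
  decode m r := Fin.cases (T.proposal r.1) (fun j => P.decode j r.2) m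

variable {T : RejectionRound X Y} (P : SharedRandomnessProtocol X Y N) {x : X} {s : T.Coin}

lemma output_prepend_of_mem (hs : s ∈ T.accept x) (r : P.Rand) :
    (P.prepend T).output x (s, r) = T.proposal s := by
  simp [output, prepend, hs]

lemma output_prepend_of_notMem (hs : s ∉ T.accept x) (r : P.Rand) :
    (P.prepend T).output x (s, r) = P.output x r := by
  simp [output, prepend, hs]

end SharedRandomnessProtocol

namespace RejectionRound

/-- The protocol which outputs the first accepted proposal out of `n` independent copies of the
round `T`, and `y₀` if there is none. -/
noncomputable def iterate (T : RejectionRound X Y) (y₀ : Y) :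
    (n : ℕ) → SharedRandomnessProtocol X Y (n + 1)
  | 0 => .const X y₀
  | n + 1 => (iterate T y₀ n).prepend T

variable (T : RejectionRound X Y)

/-- The probability that input `x` accepts the proposal. -/
def acceptProb (x : X) : ℝ :=
  ∑ s ∈ T.accept x, T.dist s

lemma sum_compl_accept (x : X) : ∑ s ∈ (T.accept x)ᶜ, T.dist s = 1 - T.acceptProb x := by
  rw [eq_sub_iff_add_eq', acceptProb, Finset.sum_add_sum_compl, stdSimplex.sum_eq_one]

variable [DecidableEq Y]

/-- The probability that input `x` accepts the proposal and the proposal is `y`. -/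
def acceptLaw (x : X) (y : Y) : ℝ :=
  ∑ s ∈ T.accept x, T.dist s * if T.proposal s = y then 1 else 0

lemma sum_acceptLaw [Fintype Y] (x : X) : ∑ y, T.acceptLaw x y = T.acceptProb x := by
  simp only [acceptLaw, acceptProb]
  rw [Finset.sum_comm]
  simp

lemma acceptLaw_nonneg (x : X) (y : Y) : 0 ≤ T.acceptLaw x y :=
  Finset.sum_nonneg fun s _ =>
    mul_nonneg (stdSimplex.zero_le T.dist s) (by split_ifs <;> norm_num)

variable [Fintype Y]

lemma law_prepend {N : ℕ} (P : SharedRandomnessProtocol X Y N) (x : X) (y : Y) :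
    (P.prepend T).law x y = T.acceptLaw x y + (1 - T.acceptProb x) * P.law x y := by
  have haccept (s : T.Coin) (hs : s ∈ T.accept x) :
      (T.dist s * ∑ r, P.dist r * if (P.prepend T).output x (s, r) = y then 1 else 0) =
        T.dist s * if T.proposal s = y then 1 else 0 := by
    simp only [P.output_prepend_of_mem hs, ← Finset.sum_mul, stdSimplex.sum_eq_one, one_mul]
  have hreject (s : T.Coin) (hs : s ∈ (T.accept x)ᶜ) :
      (T.dist s * ∑ r, P.dist r * if (P.prepend T).output x (s, r) = y then 1 else 0) =
        T.dist s * P.law x y := by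
    simp only [P.output_prepend_of_notMem (Finset.mem_compl.1 hs), P.law_apply]
  calc (P.prepend T).law x y
      = ∑ s, T.dist s * ∑ r, P.dist r * if (P.prepend T).output x (s, r) = y then 1 else 0 := by
        simp only [Finset.mul_sum, ← mul_assoc]
        exact ((P.prepend T).law_apply x y).trans (Fintype.sum_prod_type _)
    _ = T.acceptLaw x y + ∑ s ∈ (T.accept x)ᶜ, T.dist s * P.law x y := by
        rw [← Finset.sum_add_sum_compl (T.accept x), Finset.sum_congr rfl haccept,
          Finset.sum_congr rfl hreject, acceptLaw]
    _ = T.acceptLaw x y + (1 - T.acceptProb x) * P.law x y := by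
        rw [← Finset.sum_mul, sum_compl_accept]

lemma law_iterate (y₀ : Y) (n : ℕ) (x : X) (y : Y) :
    (T.iterate y₀ n).law x y =
      (∑ k ∈ Finset.range n, (1 - T.acceptProb x) ^ k) * T.acceptLaw x y +
        (1 - T.acceptProb x) ^ n * stdSimplex.vertex (S := ℝ) y₀ y := by
  induction n with
  | zero => simp [iterate, SharedRandomnessProtocol.law_const]
  | succ n ih =>
    rw [iterate, law_prepend, ih, geom_sum_succ]
    ring

lemma geom_sum_mul_acceptLaw_le_law_iterate {q : ℝ} (hq : q ≤ 1) {x : X}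
    (hT : T.acceptProb x ≤ q) (y₀ : Y) (n : ℕ) (y : Y) :
    (∑ k ∈ Finset.range n, (1 - q) ^ k) * T.acceptLaw x y ≤ (T.iterate y₀ n).law x y := by
  have hq' : 0 ≤ 1 - q := by linarith
  have hreject : 1 - q ≤ 1 - T.acceptProb x := by linarith
  calc (∑ k ∈ Finset.range n, (1 - q) ^ k) * T.acceptLaw x y
      ≤ (∑ k ∈ Finset.range n, (1 - T.acceptProb x) ^ k) * T.acceptLaw x y := by
        gcongr
        exact T.acceptLaw_nonneg x y
    _ ≤ (T.iterate y₀ n).law x y := by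
        rw [law_iterate]
        exact le_add_of_nonneg_right (mul_nonneg (pow_nonneg (hq'.trans hreject) n)
          (stdSimplex.zero_le _ y))

lemma tvDist_law_iterate_le {q : ℝ} (hq0 : 0 < q) (hq1 : q ≤ 1) {P : stdSimplex ℝ Y} {ε : Y → ℝ}
    (hε : ∀ y, 0 ≤ ε y) {x : X} (hle : ∀ y, T.acceptLaw x y ≤ q * P y)
    (hge : ∀ y, q * P y ≤ T.acceptLaw x y + ε y) (y₀ : Y) (n : ℕ) :
    tvDist ((T.iterate y₀ n).law x) P ≤ (1 - q) ^ n + (∑ y, ε y) / q := by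
  have hprob : T.acceptProb x ≤ q := calc
    T.acceptProb x = ∑ y, T.acceptLaw x y := (T.sum_acceptLaw x).symm
    _ ≤ ∑ y, q * P y := Finset.sum_le_sum fun y _ => hle y
    _ = q := by rw [← Finset.mul_sum, stdSimplex.sum_eq_one, mul_one]
  set G := ∑ k ∈ Finset.range n, (1 - q) ^ k
  have hpow : 0 ≤ (1 - q) ^ n := pow_nonneg (by linarith) n
  have hG0 : 0 ≤ G := Finset.sum_nonneg fun k _ => pow_nonneg (by linarith) k
  have hGq : G * q = 1 - (1 - q) ^ n := by linarith [geom_sum_mul (1 - q) n]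
  have hG : G ≤ 1 / q := (le_div_iff₀ hq0).2 (by linarith)
  have hdeficit (y : Y) :
      P y ≤ (T.iterate y₀ n).law x y + ((1 - q) ^ n * P y + ε y / q) := calc
    P y = G * (q * P y) + (1 - q) ^ n * P y := by linear_combination -P y * hGq
    _ ≤ G * (T.acceptLaw x y + ε y) + (1 - q) ^ n * P y := by
      linarith [mul_le_mul_of_nonneg_left (hge y) hG0]
    _ = G * T.acceptLaw x y + ((1 - q) ^ n * P y + G * ε y) := by ring
    _ ≤ (T.iterate y₀ n).law x y + ((1 - q) ^ n * P y + 1 / q * ε y) := by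
      gcongr
      · exact T.geom_sum_mul_acceptLaw_le_law_iterate hq1 hprob y₀ n y
      · exact hε y
    _ = (T.iterate y₀ n).law x y + ((1 - q) ^ n * P y + ε y / q) := by ring
  refine (tvDist_le_sum_of_le_add (by simp only [stdSimplex.sum_eq_one]) (fun y => ?_)
    hdeficit).trans_eq ?_
  · exact add_nonneg (mul_nonneg hpow (stdSimplex.zero_le P y)) (div_nonneg (hε y) hq0.le)
  · rw [Finset.sum_add_distrib, ← Finset.mul_sum, stdSimplex.sum_eq_one, mul_one, Finset.sum_div]

end RejectionRound

variable [Fintype Y]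

/-- The round which proposes `y ∼ σ` and accepts it on input `x` with probability `p x y`, rounded
down to a multiple of `1 / L`: the coin carries a uniform `t < L`, compared to `L * p x y`. -/
noncomputable def quantizedRound [DecidableEq Y] (σ : stdSimplex ℝ Y) (p : X → Y → ℝ) (L : ℕ)
    [NeZero L] : RejectionRound X Y where
  Coin := Y × Fin L
  dist := prodDist σ stdSimplex.barycenter
  proposal := Prod.fst
  accept x := {s | (s.2 : ℕ) < ⌊L * p x s.1⌋₊}

section Quantized

variable [DecidableEq Y] (σ : stdSimplex ℝ Y) {p : X → Y → ℝ} (L : ℕ) [NeZero L]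

lemma acceptLaw_quantizedRound {x : X} {y : Y} (hp : p x y ≤ 1) :
    (quantizedRound σ p L).acceptLaw x y = σ y * (⌊L * p x y⌋₊ / L) := by
  have hfloor : ⌊L * p x y⌋₊ ≤ L :=
    Nat.floor_le_of_le (mul_le_of_le_one_right (Nat.cast_nonneg L) hp)
  have hcard : ∑ t : Fin L, (if (t : ℕ) < ⌊L * p x y⌋₊ then (L : ℝ)⁻¹ else 0) =
      ⌊L * p x y⌋₊ / L := by
    rw [← Finset.sum_filter, Finset.sum_const, Fin.card_filter_val_lt, min_eq_right hfloor,
      nsmul_eq_mul, div_eq_mul_inv]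
  calc (quantizedRound σ p L).acceptLaw x y
      = ∑ s : Y × Fin L with (s.2 : ℕ) < ⌊L * p x s.1⌋₊,
          σ s.1 * (Fintype.card (Fin L) : ℝ)⁻¹ * if s.1 = y then 1 else 0 := rfl
    _ = ∑ z, ∑ t : Fin L, if z = y then
          σ z * (if (t : ℕ) < ⌊L * p x z⌋₊ then (L : ℝ)⁻¹ else 0) else 0 := by
        rw [Finset.sum_filter, Fintype.sum_prod_type]
        congr! 2 with z _ t
        split_ifs <;> simp
    _ = σ y * ∑ t : Fin L, if (t : ℕ) < ⌊L * p x y⌋₊ then (L : ℝ)⁻¹ else 0 := by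
        simp only [Finset.sum_ite_irrel, Finset.sum_const_zero, Finset.sum_ite_eq',
          Finset.mem_univ, if_true, Finset.mul_sum]
    _ = σ y * (⌊L * p x y⌋₊ / L) := by rw [hcard]

lemma acceptLaw_quantizedRound_le {x : X} {y : Y} (hp0 : 0 ≤ p x y) (hp1 : p x y ≤ 1) :
    (quantizedRound σ p L).acceptLaw x y ≤ σ y * p x y := by
  have hL : (0 : ℝ) < L := Nat.cast_pos.2 (NeZero.pos L)
  rw [acceptLaw_quantizedRound σ L hp1]
  refine mul_le_mul_of_nonneg_left ((div_le_iff₀' hL).2 ?_) (stdSimplex.zero_le σ y)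
  exact Nat.floor_le (by positivity)

lemma le_acceptLaw_quantizedRound_add {x : X} {y : Y} (hp : p x y ≤ 1) :
    σ y * p x y ≤ (quantizedRound σ p L).acceptLaw x y + σ y / L := by
  have hL : (0 : ℝ) < L := Nat.cast_pos.2 (NeZero.pos L)
  have hfloor : p x y ≤ (⌊L * p x y⌋₊ + 1) / L :=
    (le_div_iff₀' hL).2 (Nat.lt_floor_add_one _).le
  calc σ y * p x y ≤ σ y * ((⌊L * p x y⌋₊ + 1) / L) :=
        mul_le_mul_of_nonneg_left hfloor (stdSimplex.zero_le σ y)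
    _ = (quantizedRound σ p L).acceptLaw x y + σ y / L := by
        rw [acceptLaw_quantizedRound σ L hp]
        ring

end Quantized

lemma one_sub_inv_pow_natCeil_lt {C η : ℝ} (hC : 1 ≤ C) (hη0 : 0 < η) (hη1 : η < 1) :
    (1 - C⁻¹) ^ ⌈C * Real.log (1 / η)⌉₊ < η := by
  have hC0 : 0 < C := by linarith
  have hlog : 0 < Real.log (1 / η) := Real.log_pos (one_lt_one_div hη0 hη1)
  set n := ⌈C * Real.log (1 / η)⌉₊
  have hn : n ≠ 0 := (Nat.ceil_pos.2 (mul_pos hC0 hlog)).ne'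
  have hlog_le : Real.log (1 / η) ≤ n * C⁻¹ := by
    rw [← div_eq_mul_inv, le_div_iff₀' hC0]
    exact Nat.le_ceil _
  calc (1 - C⁻¹) ^ n < Real.exp (-C⁻¹) ^ n :=
        pow_lt_pow_left₀ (Real.one_sub_lt_exp_neg (inv_ne_zero hC0.ne'))
          (sub_nonneg.2 (inv_le_one_of_one_le₀ hC)) hn
    _ = Real.exp (-(n * C⁻¹)) := by rw [← Real.exp_nat_mul, mul_neg]
    _ ≤ Real.exp (-Real.log (1 / η)) := Real.exp_le_exp.2 (neg_le_neg hlog_le)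
    _ = η := by rw [one_div, Real.log_inv, neg_neg, Real.exp_log hη0]

lemma exists_protocol_tvDist_law_le (E : X → stdSimplex ℝ Y) (σ : stdSimplex ℝ Y)
    {C : ℝ} (hC : 1 ≤ C) (hdom : ∀ x y, E x y ≤ C * σ y) (n : ℕ) (L : ℕ) [NeZero L] :
    ∃ P : SharedRandomnessProtocol X Y (n + 1),
      ∀ x, tvDist (P.law x) (E x) ≤ (1 - C⁻¹) ^ n + C / L := by
  classical
  obtain ⟨y₀⟩ := nonempty_of_stdSimplex σ
  have hC0 : 0 < C := by linarith
  -- Where `σ y = 0` the quotient is `0`, which is harmless since `E x y = 0` there.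
  let p (x : X) (y : Y) : ℝ := C⁻¹ * E x y / σ y
  have hdom' (x : X) (y : Y) : C⁻¹ * E x y ≤ σ y := (inv_mul_le_iff₀ hC0).2 (hdom x y)
  have hnum (x : X) (y : Y) : 0 ≤ C⁻¹ * E x y :=
    mul_nonneg (inv_pos.2 hC0).le (stdSimplex.zero_le (E x) y)
  have hp0 (x : X) (y : Y) : 0 ≤ p x y := div_nonneg (hnum x y) (stdSimplex.zero_le σ y)
  have hp1 (x : X) (y : Y) : p x y ≤ 1 := div_le_one_of_le₀ (hdom' x y) (stdSimplex.zero_le σ y)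
  have hσp (x : X) (y : Y) : σ y * p x y = C⁻¹ * E x y :=
    mul_div_cancel_of_imp' fun h => le_antisymm (h ▸ hdom' x y) (hnum x y)
  refine ⟨(quantizedRound σ p L).iterate y₀ n, fun x => ?_⟩
  have herr : (∑ y, σ y / L) / C⁻¹ = C / L := by
    rw [← Finset.sum_div, stdSimplex.sum_eq_one, div_inv_eq_mul, one_div_mul_eq_div]
  rw [← herr]
  refine RejectionRound.tvDist_law_iterate_le _ (inv_pos.2 hC0) (inv_le_one_of_one_le₀ hC)
    (fun y => div_nonneg (stdSimplex.zero_le σ y) (Nat.cast_nonneg L))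
    (fun y => ?_) (fun y => ?_) y₀ n
  · exact hσp x y ▸ acceptLaw_quantizedRound_le σ L (hp0 x y) (hp1 x y)
  · exact hσp x y ▸ le_acceptLaw_quantizedRound_add σ L (hp1 x y)

theorem channel_compression_general (E : X → stdSimplex ℝ Y) (σ : stdSimplex ℝ Y) {C : ℝ}
    (hC : 1 ≤ C) (hdom : ∀ x y, E x y ≤ C * σ y) {η : ℝ} (hη0 : 0 < η) (hη1 : η < 1) :
    ∃ P : SharedRandomnessProtocol X Y (⌈C * Real.log (1 / η)⌉₊ + 1),
      ∀ x, tvDist (P.law x) (E x) ≤ η := by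
  set n := ⌈C * Real.log (1 / η)⌉₊
  have hslack : 0 < η - (1 - C⁻¹) ^ n := sub_pos.2 (one_sub_inv_pow_natCeil_lt hC hη0 hη1)
  obtain ⟨L, hL⟩ := exists_nat_gt (C / (η - (1 - C⁻¹) ^ n))
  have hL0 : (0 : ℝ) < L := (by positivity : 0 ≤ C / (η - (1 - C⁻¹) ^ n)).trans_lt hL
  have : NeZero L := ⟨(Nat.cast_pos.1 hL0).ne'⟩
  obtain ⟨P, hP⟩ := exists_protocol_tvDist_law_le E σ hC hdom n L
  refine ⟨P, fun x => (hP x).trans ?_⟩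
  linarith [(div_lt_comm₀ hslack hL0).1 hL]

end RejectionSampling

/-- Compression of a classical channel by rejection sampling. If
`E(x)(y) ≤ 2^c·σ(y)` for all `x, y` (i.e. `D_max(E(x)‖σ) ≤ c` for all `x`), then for every
`η ∈ (0,1)` there are shared randomness `(R, μ)` (a finite nonempty set, modelled as `Fin K`
with `K ≥ 1`), a number `N ≤ ⌈2^c · ln(1/η)⌉ + 1` of possible messages, a message function
`M : X × R → {1,…,N}` and an output function `g : {1,…,N} × R → Y` such that for every `x` the
total variation distance between the distribution of `g(M(x,r), r)` for `r ∼ μ` and `E(x)` is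
at most `η`. -/
theorem channel_compression {X Y : Type*} [Fintype X] [Nonempty X] [Fintype Y] [Nonempty Y]
    [DecidableEq Y]
    (E : X → Y → ℝ) (hE : ∀ x, (∀ y, 0 ≤ E x y) ∧ ∑ y, E x y = 1)
    (σ : Y → ℝ) (hσ0 : ∀ y, 0 ≤ σ y) (hσ1 : ∑ y, σ y = 1)
    (c : ℝ) (hc : 0 ≤ c) (hdom : ∀ x y, E x y ≤ 2 ^ c * σ y)
    (η : ℝ) (hη0 : 0 < η) (hη1 : η < 1) :
    ∃ (K : ℕ), 0 < K ∧
      ∃ μ : Fin K → ℝ, (∀ r, 0 ≤ μ r) ∧ (∑ r, μ r = 1) ∧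
        ∃ (N : ℕ) (M : X → Fin K → Fin N) (g : Fin N → Fin K → Y),
          N ≤ ⌈(2 : ℝ) ^ c * Real.log (1 / η)⌉₊ + 1 ∧
          ∀ x, (1 / 2) * ∑ y,
              |(∑ r, μ r * (if g (M x r) r = y then (1 : ℝ) else 0)) - E x y| ≤ η := by
  obtain ⟨P, hP⟩ := channel_compression_general (fun x => ⟨E x, hE x⟩) ⟨σ, hσ0, hσ1⟩
    (Real.one_le_rpow one_le_two hc) hdom hη0 hη1
  obtain ⟨K, hK, μ, M, g, hlaw⟩ := P.exists_fin_rand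
  refine ⟨K, hK, μ, stdSimplex.zero_le μ, stdSimplex.sum_eq_one μ, _, M, g, le_rfl, fun x => ?_⟩
  simp only [hlaw]
  exact hP x
end

section
/- Let n ≥ 1, let x ↦ ρ_x map {0,1}^n to density matrices on ℂ^d, let {Q_y}_{y∈{0,1}^n} be a POVM on ℂ^d, and suppose the uniform-average Hamming-distance bound 2^{−n} · Σ_{x'∈{0,1}^n} Σ_{y'∈{0,1}^n} Tr(Q_{y'} ρ_{x'}) · d_H(x', y') ≤ ε·n holds for some ε ≥ 0. For a shift amount t ∈ {1,…,n} define SHIFT_t : {0,1}^n → {0,1}^n by (SHIFT_t(z))_i = z_{((i+t−1 mod n)+1)}. Then for every x ∈ {0,1}^n and every i ∈ [n]: (1/(n·2^n)) · Σ_{t=1}^{n} Σ_{r∈{0,1}^n} Σ_{y'∈{0,1}^n : (SHIFT_{−t}(y') ⊕ r)_i = x_i} Tr(Q_{y'} ρ_{SHIFT_t(x ⊕ r)}) ≥ 1 − ε, where ⊕ is bitwise XOR and SHIFT_{−t} is the inverse of SHIFT_t. -/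
open Matrix BigOperators ComplexOrder

/-!
Write `p z y = Tr (Q_y ρ_z)` for the probability of the output `y` on the encoding of `z`, so that
`∑ y, p z y = 1`. The one-time pad makes the shifted encryption of `x` a uniformly random string
`z`, whatever `x` and the shift are, and the bit of interest is decoded correctly exactly when the
output `y` agrees with `z` at position `i - t`. As the shift `t` varies, `i - t` ranges over all
positions, so the average success probability is the expected fraction of positions where `y` and
`z` agree, which is one minus the normalized expected Hamming distance.
-/

section Agreement

variable {ι : Type*} [Fintype ι]

lemma card_filter_apply_eq_add_hammingDist {β : ι → Type*} [∀ j, DecidableEq (β j)]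
    (z y : ∀ j, β j) :
    (Finset.univ.filter fun j => z j = y j).card + hammingDist z y = Fintype.card ι :=
  Finset.card_filter_add_card_filter_not _

variable {α R : Type*} [DecidableEq α] [Ring R]

lemma sum_ite_apply_eq (z y : ι → α) (c : R) :
    ∑ j, (if y j = z j then c else 0) = (Fintype.card ι - hammingDist z y : R) * c := by
  rw [← Finset.sum_filter, Finset.sum_const, nsmul_eq_mul, hammingDist_comm z y,
    ← card_filter_apply_eq_add_hammingDist y z, Nat.cast_add, add_sub_cancel_right]

lemma sum_sum_sum_ite_apply_eq [DecidableEq ι] [Fintype α] {p : (ι → α) → (ι → α) → R}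
    (hp : ∀ z, ∑ y, p z y = 1) :
    ∑ j, ∑ z, ∑ y, (if y j = z j then p z y else 0)
      = Fintype.card ι * Fintype.card α ^ Fintype.card ι
        - ∑ z, ∑ y, hammingDist z y * p z y := by
  have expected_agreements (z : ι → α) :
      ∑ j, ∑ y, (if y j = z j then p z y else 0)
        = Fintype.card ι - ∑ y, hammingDist z y * p z y := by
    rw [Finset.sum_comm]
    simp only [sum_ite_apply_eq, sub_mul, Finset.sum_sub_distrib, ← Finset.mul_sum, hp, mul_one]
  rw [Finset.sum_comm]
  simp only [expected_agreements, Finset.sum_sub_distrib, Finset.sum_const, Finset.card_univ,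
    Fintype.card_fun, nsmul_eq_mul, Nat.cast_pow, Nat.cast_comm]

end Agreement

section OneTimePad

variable {ι : Type*} [Fintype ι] [DecidableEq ι]

lemma sum_comp_xor_perm {M : Type*} [AddCommMonoid M] (x : ι → Bool) (σ : Equiv.Perm ι)
    (g : (ι → Bool) → M) :
    ∑ r : ι → Bool, g (fun j => xor (x (σ j)) (r (σ j))) = ∑ z, g z := by
  have pad_involutive : Function.Involutive fun (r : ι → Bool) j => xor (x j) (r j) :=
    fun r => funext fun j => Bool.bne_self_left (x j) (r j)
  exact (pad_involutive.toPerm.trans (σ.symm.arrowCongr (Equiv.refl Bool))).sum_comp g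

variable [AddGroup ι]

lemma sum_sum_ite_xor_eq {M : Type*} [AddCommMonoid M]
    (p : (ι → Bool) → (ι → Bool) → M) (x : ι → Bool) (i t : ι) :
    ∑ r : ι → Bool, ∑ y : ι → Bool,
        (if xor (y (i - t)) (r i) = x i
          then p (fun j => xor (x (j + t)) (r (j + t))) y else 0)
      = ∑ z, ∑ y, (if y (i - t) = z (i - t) then p z y else 0) := by
  have decoded_iff (a b c : Bool) : xor a b = c ↔ a = xor c b := by
    cases a <;> cases b <;> cases c <;> decide
  rw [← sum_comp_xor_perm x (Equiv.addRight t) fun z =>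
    ∑ y, if y (i - t) = z (i - t) then p z y else 0]
  simp only [Equiv.coe_addRight, sub_add_cancel, decoded_iff]

lemma sum_symmetrized_success {R : Type*} [Ring R] {p : (ι → Bool) → (ι → Bool) → R}
    (hp : ∀ z, ∑ y, p z y = 1) (x : ι → Bool) (i : ι) :
    ∑ t : ι, ∑ r : ι → Bool, ∑ y : ι → Bool,
        (if xor (y (i - t)) (r i) = x i
          then p (fun j => xor (x (j + t)) (r (j + t))) y else 0)
      = Fintype.card ι * 2 ^ Fintype.card ι - ∑ z, ∑ y, p z y * hammingDist z y := by
  calc _ = ∑ t, ∑ z, ∑ y, (if y (i - t) = z (i - t) then p z y else 0) := by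
        simp only [sum_sum_ite_xor_eq]
    _ = ∑ j, ∑ z, ∑ y, (if y j = z j then p z y else 0) :=
        Fintype.sum_equiv (Equiv.subLeft i) _ _ fun _ => rfl
    _ = _ := by
        simp only [sum_sum_sum_ite_apply_eq hp, Fintype.card_bool, Nat.cast_ofNat, Nat.cast_comm]

theorem symmetrized_success_eq_one_sub {K : Type*} [Field K] [CharZero K]
    {p : (ι → Bool) → (ι → Bool) → K} (hp : ∀ z, ∑ y, p z y = 1) (x : ι → Bool) (i : ι) :
    1 / (Fintype.card ι * 2 ^ Fintype.card ι : K) * ∑ t : ι, ∑ r : ι → Bool, ∑ y : ι → Bool,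
        (if xor (y (i - t)) (r i) = x i
          then p (fun j => xor (x (j + t)) (r (j + t))) y else 0)
      = 1 - (2 ^ Fintype.card ι)⁻¹ * (∑ z, ∑ y, p z y * hammingDist z y) / Fintype.card ι := by
  have card_ne_zero : (Fintype.card ι : K) ≠ 0 := Nat.cast_ne_zero.mpr Fintype.card_ne_zero
  rw [sum_symmetrized_success hp]
  field_simp

end OneTimePad

theorem symmetrized_qrac_bit_success_general {ι K : Type*} [Fintype ι] [DecidableEq ι] [AddGroup ι]
    [Field K] [LinearOrder K] [IsStrictOrderedRing K]
    {p : (ι → Bool) → (ι → Bool) → K} (hp : ∀ z, ∑ y, p z y = 1) {ε : K}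
    (havg : (2 ^ Fintype.card ι)⁻¹ * ∑ z, ∑ y, p z y * hammingDist z y ≤ ε * Fintype.card ι)
    (x : ι → Bool) (i : ι) :
    1 - ε ≤ 1 / (Fintype.card ι * 2 ^ Fintype.card ι : K) *
      ∑ t : ι, ∑ r : ι → Bool, ∑ y : ι → Bool,
        (if xor (y (i - t)) (r i) = x i
          then p (fun j => xor (x (j + t)) (r (j + t))) y else 0) := by
  have card_pos : (0 : K) < Fintype.card ι := Nat.cast_pos.mpr Fintype.card_pos
  rw [symmetrized_success_eq_one_sub hp]
  exact sub_le_sub_left ((div_le_iff₀ card_pos).mpr havg) 1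

lemma sum_re_trace_mul_eq_one {κ m : Type*} [Fintype κ] [Fintype m] [DecidableEq m]
    {Q : κ → Matrix m m ℂ} (hQ : ∑ y, Q y = 1) {A : Matrix m m ℂ} (hA : A.trace = 1) :
    ∑ y, ((Q y * A).trace).re = 1 := by
  rw [← Complex.re_sum, ← Matrix.trace_sum, ← Finset.sum_mul, hQ, one_mul, hA, Complex.one_re]

/-- STATEMENT 12: Symmetrization of an average-case Hamming-distance guarantee. Indices are
`Fin n` (0-indexed), so the cyclic shift `SHIFT_t` of the statement is
`(SHIFT_t z) i = z (i + t)` with addition in `Fin n`, its inverse being `z ↦ (i ↦ z (i - t))`;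
the shift amounts `t ∈ {1,…,n}` correspond to the `n` elements of `Fin n`.
If the uniform-average Hamming-distance bound
`2^{−n}·Σ_{x'} Σ_{y'} Tr(Q_{y'} ρ_{x'})·d_H(x',y') ≤ ε·n` holds, then for every `x` and `i`,
averaging over the shift `t` and the one-time pad `r`, the probability that the symmetrized
protocol's output bit `(SHIFT_{−t}(y') ⊕ r)_i` equals `x_i` is at least `1 − ε`. -/
theorem symmetrized_qrac_bit_success (n : ℕ) [NeZero n] (d : ℕ)
    (ρ : (Fin n → Bool) → Matrix (Fin d) (Fin d) ℂ)
    (hρ : ∀ x, (ρ x).PosSemidef ∧ (ρ x).trace = 1)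
    (Q : (Fin n → Bool) → Matrix (Fin d) (Fin d) ℂ)
    (hQ : (∀ y, (Q y).PosSemidef) ∧ ∑ y, Q y = 1)
    (ε : ℝ) (hε : 0 ≤ ε)
    (havg : (2 : ℝ) ^ (-(n : ℝ)) *
        ∑ x', ∑ y', ((Q y' * ρ x').trace).re * (hammingDist x' y' : ℝ) ≤ ε * n) :
    ∀ (x : Fin n → Bool) (i : Fin n),
      1 - ε ≤ (1 / ((n : ℝ) * 2 ^ n)) * ∑ t : Fin n, ∑ r : Fin n → Bool,
        ∑ y' : Fin n → Bool,
          (if xor (y' (i - t)) (r i) = x i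
            then ((Q y' * ρ (fun j => xor (x (j + t)) (r (j + t)))).trace).re
            else 0) := by
  simpa only [Fintype.card_fin] using symmetrized_qrac_bit_success_general
    (fun z => sum_re_trace_mul_eq_one hQ.2 (hρ z).2)
    (by simpa only [Fintype.card_fin, Real.rpow_neg zero_le_two, Real.rpow_natCast] using havg)
end

section
/- Let S be a finite nonempty set with a probability distribution μ, let J be a finite nonempty index set with |J| = M, let f : J → S → [0,1] be a family of [0,1]-valued functions, and let η > 0. Then there exist a natural number k with 1 ≤ k ≤ ⌈ln(M)/(2η²)⌉ + 1 and a tuple s : {1,…,k} → S such that for every j ∈ J: (1/k)·Σ_{t=1}^{k} f(j)(s(t)) ≤ E_{s∼μ}[f(j)(s)] + η. -/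
open BigOperators

/-!
Draw `k` points independently from `μ`. By Hoeffding's inequality the empirical average of one
`f j` exceeds its mean by `η` or more with probability at most `exp (-2 k η²)`. Once
`k > ln M / (2 η²)` the sum of these `M` failure probabilities is below `1`, so some sample is
good for every `j` simultaneously.
-/

section Sampling

open MeasureTheory ProbabilityTheory
open scoped NNReal

variable {S : Type*} [MeasurableSpace S]

lemma exists_forall_notMem_of_sum_measureReal_lt_one {μ : Measure S} [IsProbabilityMeasure μ]
    {J : Type*} [Fintype J] {A : J → Set S} (hA : ∑ j, μ.real (A j) < 1) :
    ∃ x, ∀ j, x ∉ A j := by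
  by_contra! h_cover
  have h_univ : ⋃ j, A j = Set.univ := Set.iUnion_eq_univ_iff.mpr h_cover
  have h_union : μ.real (⋃ j, A j) ≤ ∑ j, μ.real (A j) := measureReal_iUnion_fintype_le A
  rw [h_univ, probReal_univ] at h_union
  exact h_union.not_gt hA

lemma measureReal_pi_le_sum_le_of_hasSubgaussianMGF {μ : Measure S} [IsProbabilityMeasure μ]
    {X : S → ℝ} {c : ℝ≥0} (hX : HasSubgaussianMGF X c μ) {ι : Type*} [Fintype ι] {ε : ℝ}
    (hε : 0 ≤ ε) :
    (Measure.pi fun _ : ι => μ).real {s | ε ≤ ∑ i, X (s i)} ≤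
      Real.exp (-ε ^ 2 / (2 * (Fintype.card ι * c))) := by
  have h_indep : iIndepFun (fun i (s : ι → S) => X (s i)) (Measure.pi fun _ => μ) :=
    iIndepFun_pi fun _ => hX.aemeasurable
  have h_subG (i : ι) : HasSubgaussianMGF (fun s : ι → S => X (s i)) c (Measure.pi fun _ => μ) :=
    .of_map (measurable_pi_apply i).aemeasurable
      (by rwa [(measurePreserving_eval (fun _ : ι => μ) i).map_eq])
  simpa using HasSubgaussianMGF.measure_sum_ge_le_of_iIndepFun h_indep
    (s := Finset.univ) (fun i _ => h_subG i) hε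

lemma exists_sample_forall_average_lt_of_hasSubgaussianMGF {μ : Measure S}
    [IsProbabilityMeasure μ] {J : Type*} [Fintype J] {f : J → S → ℝ} {c : ℝ≥0}
    (hf : ∀ j, HasSubgaussianMGF (fun x => f j x - ∫ a, f j a ∂μ) c μ) {η : ℝ} (hη : 0 ≤ η)
    {k : ℕ} (hk : Real.log (Fintype.card J) < k * η ^ 2 / (2 * c)) :
    ∃ s : Fin k → S, ∀ j, (1 / (k : ℝ)) * ∑ t, f j (s t) < (∫ a, f j a ∂μ) + η := by
  have hk_pos : (0 : ℝ) < k := by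
    refine Nat.cast_pos.mpr (Nat.pos_of_ne_zero ?_)
    rintro rfl
    simpa using (Real.log_natCast_nonneg _).trans_lt hk
  have h_tail (j : J) : (Measure.pi fun _ : Fin k => μ).real
      {s | k * η ≤ ∑ t, (f j (s t) - ∫ a, f j a ∂μ)} ≤ Real.exp (-(k * η ^ 2 / (2 * c))) := by
    refine (measureReal_pi_le_sum_le_of_hasSubgaussianMGF (hf j) (by positivity)).trans_eq ?_
    rw [Fintype.card_fin]
    field_simp
  have h_union : ∑ j, (Measure.pi fun _ : Fin k => μ).real
      {s | k * η ≤ ∑ t, (f j (s t) - ∫ a, f j a ∂μ)} < 1 := calc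
    _ ≤ ∑ _ : J, Real.exp (-(k * η ^ 2 / (2 * c))) := Finset.sum_le_sum fun j _ => h_tail j
    _ = Fintype.card J * Real.exp (-(k * η ^ 2 / (2 * c))) := by simp
    _ < 1 := by
      rw [Real.exp_neg, ← div_eq_mul_inv, div_lt_one (Real.exp_pos _)]
      exact Real.lt_exp_of_log_lt hk
  obtain ⟨s, hs⟩ := exists_forall_notMem_of_sum_measureReal_lt_one h_union
  refine ⟨s, fun j => ?_⟩
  have h_dev : ∑ t, f j (s t) - k * ∫ a, f j a ∂μ < k * η := by
    simpa [Finset.sum_sub_distrib] using hs j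
  rw [one_div_mul_eq_div, div_lt_iff₀ hk_pos]
  linarith

lemma exists_isProbabilityMeasure_integral_eq_sum [Fintype S] [MeasurableSingletonClass S]
    {w : S → ℝ} (hw0 : ∀ x, 0 ≤ w x) (hw1 : ∑ x, w x = 1) :
    ∃ μ : Measure S, IsProbabilityMeasure μ ∧ ∀ g : S → ℝ, ∫ x, g x ∂μ = ∑ x, w x * g x := by
  have h_sum : ∑ x, ENNReal.ofReal (w x) = 1 := by
    rw [← ENNReal.ofReal_sum_of_nonneg fun x _ => hw0 x, hw1, ENNReal.ofReal_one]
  refine ⟨(PMF.ofFintype _ h_sum).toMeasure, inferInstance, fun g => ?_⟩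
  simp [PMF.integral_eq_sum, ENNReal.toReal_ofReal (hw0 _)]

theorem sampling_derandomization_general (μ : Measure S) [IsProbabilityMeasure μ]
    {J : Type*} [Fintype J] {f : J → S → ℝ} (hf : ∀ j, AEMeasurable (f j) μ) {a b : ℝ}
    (hab : ∀ j, ∀ᵐ x ∂μ, f j x ∈ Set.Icc a b) {η : ℝ} (hη : 0 < η) {k : ℕ}
    (hk : Real.log (Fintype.card J) / (2 * η ^ 2) < k / (b - a) ^ 2) :
    ∃ s : Fin k → S, ∀ j, (1 / (k : ℝ)) * ∑ t, f j (s t) < (∫ x, f j x ∂μ) + η := by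
  rw [div_lt_iff₀ (by positivity)] at hk
  refine exists_sample_forall_average_lt_of_hasSubgaussianMGF
    (fun j => hasSubgaussianMGF_of_mem_Icc (hf j) (hab j)) hη.le (hk.trans_eq ?_)
  push_cast
  rw [Real.norm_eq_abs, div_pow, sq_abs]
  field_simp

end Sampling

/-- STATEMENT 13: Derandomization by sampling (Newman-style). For a finite family of
`[0,1]`-valued functions `f j : S → [0,1]` (`j` ranging over `J` with `|J| = M`), a distribution
`μ` on `S` and `η > 0`, there exist `k` with `1 ≤ k ≤ ⌈ln(M)/(2η²)⌉ + 1` and a tuple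
`s : Fin k → S` such that for every `j`, the empirical average of `f j` over the tuple exceeds
the true expectation `E_{s∼μ}[f j s]` by at most `η`. -/
theorem sampling_derandomization {S : Type*} [Fintype S] [Nonempty S]
    (μ : S → ℝ) (hμ0 : ∀ s, 0 ≤ μ s) (hμ1 : ∑ s, μ s = 1)
    {J : Type*} [Fintype J] [Nonempty J]
    (f : J → S → ℝ) (hf : ∀ j s, 0 ≤ f j s ∧ f j s ≤ 1)
    (η : ℝ) (hη : 0 < η) :
    ∃ k : ℕ, 1 ≤ k ∧ k ≤ ⌈Real.log (Fintype.card J) / (2 * η ^ 2)⌉₊ + 1 ∧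
      ∃ s : Fin k → S, ∀ j : J,
        (1 / (k : ℝ)) * ∑ t, f j (s t) ≤ (∑ a, μ a * f j a) + η := by
  let : MeasurableSpace S := ⊤
  have : DiscreteMeasurableSpace S := ⟨fun _ => trivial⟩
  obtain ⟨ν, _, hν⟩ := exists_isProbabilityMeasure_integral_eq_sum hμ0 hμ1
  have hk := Nat.lt_of_ceil_lt (Nat.lt_add_one ⌈Real.log (Fintype.card J) / (2 * η ^ 2)⌉₊)
  obtain ⟨s, hs⟩ := sampling_derandomization_general ν
    (fun _ => Measurable.of_discrete.aemeasurable) (fun j => .of_forall (hf j)) hη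
    (by simpa only [sub_zero, one_pow, div_one] using hk)
  exact ⟨_, Nat.le_add_left 1 _, le_rfl, s, fun j => hν (f j) ▸ (hs j).le⟩
end

section
/- Let X and Y be finite nonempty sets and E : X → (probability distributions on Y) a classical channel. Then the max channel capacity C_max(E), defined as the maximum over probability distributions P on X of the max-information I_max(X : Y) of the joint distribution (x,y) ↦ P(x)·E(x)(y), equals inf over probability distributions σ on Y of max_{x∈X} D_max(E(x) ‖ σ) (with values in the extended reals). -/
open BigOperators

/-- Max-relative entropy `D_max(P‖Q) = inf{λ ∈ ℝ : P(a) ≤ 2^λ·Q(a) for all a}`, as an extended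
real (`+∞` when no such `λ` exists, e.g. when the support of `P` is not contained in that of
`Q`). -/
noncomputable def Dmax {α : Type*} [Fintype α] (P Q : α → ℝ) : EReal :=
  sInf ((fun l : ℝ => (l : EReal)) '' {l : ℝ | ∀ a, P a ≤ 2 ^ l * Q a})

/-!
A real `l` bounds `D_max(P‖Q)` exactly when `P ≤ 2 ^ l · Q` pointwise. Cancelling the weight
`p x > 0` from `p x * W x y ≤ 2 ^ l * (p x * σ y)` therefore turns the max-information of the joint
distribution into `inf_σ max D_max(W x‖σ)` over the support of `p`. It only depends on that
support and is largest when the support is everything, for instance for the uniform distribution.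
-/

open Function

section Dmax

variable {α X Y : Type*} [Fintype α] [Fintype X] [Fintype Y]

theorem Dmax_le_coe_iff {P Q : α → ℝ} (hQ : 0 ≤ Q) {l : ℝ} :
    Dmax P Q ≤ (l : EReal) ↔ ∀ a, P a ≤ 2 ^ l * Q a := by
  refine ⟨fun h a => ?_, fun h => sInf_le ⟨l, h, rfl⟩⟩
  have bound_of_gt : ∀ r > l, P a ≤ 2 ^ r * Q a := fun r hr => by
    obtain ⟨_, ⟨s, hs, rfl⟩, hsr⟩ := sInf_lt_iff.1 (h.trans_lt (EReal.coe_lt_coe hr))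
    calc P a ≤ 2 ^ s * Q a := hs a
      _ ≤ 2 ^ r * Q a := by
        gcongr
        exacts [hQ a, one_le_two, (EReal.coe_lt_coe_iff.1 hsr).le]
  have hcont : Continuous fun r : ℝ => (2 : ℝ) ^ r * Q a :=
    (Real.continuous_const_rpow two_ne_zero).mul_const _
  exact ge_of_tendsto (hcont.continuousWithinAt (s := Set.Ioi l))
    (eventually_nhdsWithin_of_forall bound_of_gt)

theorem Dmax_joint_eq_iSup_support {p : X → ℝ} {W V : X → Y → ℝ} (hp : 0 ≤ p) (hV : 0 ≤ V) :
    Dmax (fun q : X × Y => p q.1 * W q.1 q.2) (fun q => p q.1 * V q.1 q.2) =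
      ⨆ x ∈ support p, Dmax (W x) (V x) := by
  have le_coe_iff (l : ℝ) :
      Dmax (fun q : X × Y => p q.1 * W q.1 q.2) (fun q => p q.1 * V q.1 q.2) ≤ (l : EReal) ↔
        ⨆ x ∈ support p, Dmax (W x) (V x) ≤ (l : EReal) := by
    rw [Dmax_le_coe_iff fun q : X × Y => mul_nonneg (hp q.1) (hV q.1 q.2), iSup₂_le_iff,
      Prod.forall]
    refine forall_congr' fun x => ?_
    rw [Dmax_le_coe_iff (hV x)]
    rcases (hp x).eq_or_lt with (hx : 0 = p x) | (hx : 0 < p x)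
    · simp [← hx]
    · simp [hx.ne', mul_left_comm _ (p x), hx]
  exact le_antisymm
    (EReal.le_of_forall_lt_iff_le.1 fun l hl => (le_coe_iff l).2 hl.le)
    (EReal.le_of_forall_lt_iff_le.1 fun l hl => (le_coe_iff l).1 hl.le)

end Dmax

section MaxInformation

variable {X Y : Type*} [Fintype X] [Fintype Y]

/-- The max-information `I_max(X:Y) = inf_σ D_max(R ‖ R_X ⊗ σ)` of a joint distribution `R`, where
`R_X` is the marginal of `R` on `X` and `σ` ranges over the probability distributions on `Y`. -/
noncomputable def maxInformation (R : X × Y → ℝ) : EReal :=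
  ⨅ σ : stdSimplex ℝ Y, Dmax R (fun q => (∑ y, R (q.1, y)) * σ.1 q.2)

theorem maxInformation_joint_eq_iInf_iSup_support {p : X → ℝ} {W : X → Y → ℝ} (hp : 0 ≤ p)
    (hW : ∀ x, ∑ y, W x y = 1) :
    maxInformation (fun q : X × Y => p q.1 * W q.1 q.2) =
      ⨅ σ : stdSimplex ℝ Y, ⨆ x ∈ support p, Dmax (W x) σ.1 := by
  simp only [maxInformation, ← Finset.mul_sum, hW, mul_one]
  exact iInf_congr fun σ => Dmax_joint_eq_iSup_support hp fun _ => σ.2.1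

end MaxInformation

theorem max_channel_capacity_formula_general {X Y : Type*} [Fintype X] [Nonempty X] [Fintype Y]
    (W : X → Y → ℝ) (hW : ∀ x, ∑ y, W x y = 1) :
    ⨆ p : stdSimplex ℝ X, maxInformation (fun q : X × Y => p.1 q.1 * W q.1 q.2) =
      ⨅ σ : stdSimplex ℝ Y, ⨆ x, Dmax (W x) σ.1 := by
  simp only [fun p : stdSimplex ℝ X => maxInformation_joint_eq_iInf_iSup_support p.2.1 hW]
  refine le_antisymm (iSup_le fun p => iInf_mono fun σ => iSup_mono fun x => iSup_const_le) ?_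
  have support_uniform : support (stdSimplex.barycenter : stdSimplex ℝ X).1 = Set.univ := by
    simp [Set.eq_univ_iff_forall, stdSimplex.barycenter]
  exact le_iSup_of_le stdSimplex.barycenter (by simp [support_uniform])

/-- STATEMENT 15: The max channel capacity of a classical channel `E : X → P(Y)`, i.e. the
supremum over input distributions `P` of the max-information
`I_max(X:Y) = inf_σ D_max(R ‖ R_X ⊗ σ)` of the joint distribution `R(x,y) = P(x)·E(x)(y)`
(with `R_X` its marginal on `X`), equals `inf_σ max_{x∈X} D_max(E(x)‖σ)` in the extended
reals. -/
theorem max_channel_capacity_formula {X Y : Type*} [Fintype X] [Nonempty X]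
    [Fintype Y] [Nonempty Y]
    (E : X → Y → ℝ) (hE : ∀ x, (∀ y, 0 ≤ E x y) ∧ ∑ y, E x y = 1) :
    (⨆ P : {P : X → ℝ // (∀ x, 0 ≤ P x) ∧ ∑ x, P x = 1},
        ⨅ σ : {σ : Y → ℝ // (∀ y, 0 ≤ σ y) ∧ ∑ y, σ y = 1},
          Dmax (fun q : X × Y => P.1 q.1 * E q.1 q.2)
            (fun q : X × Y => (∑ y, P.1 q.1 * E q.1 y) * σ.1 q.2))
      = ⨅ σ : {σ : Y → ℝ // (∀ y, 0 ≤ σ y) ∧ ∑ y, σ y = 1},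
          ⨆ x : X, Dmax (E x) σ.1 :=
  max_channel_capacity_formula_general E fun x => (hE x).2
end
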